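/- arXiv:1806.03487 — 10 statements merged into one kernel-verified Lean document; each statement's English description precedes it below -/
import Mathlib

section
/- Let N ≥ 1, let D be an N×N real diagonal matrix with nonnegative diagonal entries, let R be an N×N real matrix with nonnegative entries, and let π ∈ ℝ^N be a row vector all of whose entries are strictly positive. If there exists a row vector v ∈ ℝ^N with nonnegative entries satisfying v·D = π + v·R, then every eigenvalue of R − D (every element of the spectrum of the complex matrix obtained from R − D) has strictly negative real part. -/
open Matrix

/-!
Scale row `i` of `μ - A` by the weight `v i`. The inequality `v A < c v` for a matrix `A` with
nonnegative off-diagonal entries makes the scaled matrix strictly diagonally dominant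
by columns as soon as `c ≤ re μ`, because `re μ - A j j ≤ ‖μ - A j j‖`. By Gershgorin such a `μ` is
not an eigenvalue. The age-balance equation is the case `A = R - D`, `c = 0`, in which
`v A = -π < 0`.
-/

section DiagonalDominance

variable {n : Type*} [Fintype n] [DecidableEq n]

theorem det_ne_zero_of_weighted_sum_col_lt_diag {K : Type*} [NormedField K] {A : Matrix n n K}
    (w : n → K) (h : ∀ j, ∑ i ∈ Finset.univ.erase j, ‖w i‖ * ‖A i j‖ < ‖w j‖ * ‖A j j‖) :
    A.det ≠ 0 := by
  have hdet : (diagonal w * A).det ≠ 0 :=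
    det_ne_zero_of_sum_col_lt_diag fun j ↦ by simpa only [diagonal_mul, norm_mul] using h j
  rw [det_mul] at hdet
  exact right_ne_zero_of_mul hdet

theorem re_lt_of_mem_spectrum_of_weighted_sum_col_lt {A : Matrix n n ℂ} {v : n → ℝ} {c : ℝ}
    (hv : ∀ i, 0 ≤ v i)
    (h : ∀ j, ∑ i ∈ Finset.univ.erase j, v i * ‖A i j‖ < v j * (c - (A j j).re))
    {μ : ℂ} (hμ : μ ∈ spectrum ℂ A) : μ.re < c := by
  contrapose! hμ
  rw [spectrum.notMem_iff, isUnit_iff_isUnit_det, isUnit_iff_ne_zero]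
  refine det_ne_zero_of_weighted_sum_col_lt_diag (fun i ↦ (v i : ℂ)) fun j ↦ ?_
  have hdiag : c - (A j j).re ≤ ‖μ - A j j‖ :=
    calc c - (A j j).re ≤ (μ - A j j).re := by rw [Complex.sub_re]; gcongr
      _ ≤ ‖μ - A j j‖ := Complex.re_le_norm _
  calc ∑ i ∈ Finset.univ.erase j, ‖(v i : ℂ)‖ * ‖(algebraMap ℂ (Matrix n n ℂ) μ - A) i j‖
      = ∑ i ∈ Finset.univ.erase j, v i * ‖A i j‖ := by
        refine Finset.sum_congr rfl fun i hi ↦ ?_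
        simp [algebraMap_matrix_apply, Finset.ne_of_mem_erase hi, abs_of_nonneg (hv i)]
    _ < v j * (c - (A j j).re) := h j
    _ ≤ v j * ‖μ - A j j‖ := mul_le_mul_of_nonneg_left hdiag (hv j)
    _ = ‖(v j : ℂ)‖ * ‖(algebraMap ℂ (Matrix n n ℂ) μ - A) j j‖ := by
        simp [algebraMap_matrix_apply, abs_of_nonneg (hv j)]

theorem stmt_0_general {A : Matrix n n ℝ} (hA : ∀ i j, i ≠ j → 0 ≤ A i j) {v : n → ℝ} {c : ℝ}
    (hv : ∀ i, 0 ≤ v i) (hvA : ∀ j, (v ᵥ* A) j < c * v j) :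
    ∀ μ ∈ spectrum ℂ (A.map (algebraMap ℝ ℂ)), μ.re < c := by
  refine fun μ ↦ re_lt_of_mem_spectrum_of_weighted_sum_col_lt hv fun j ↦ ?_
  have hsplit : ∑ i ∈ Finset.univ.erase j, v i * A i j + v j * A j j = (v ᵥ* A) j :=
    Finset.sum_erase_add _ _ (Finset.mem_univ j)
  calc ∑ i ∈ Finset.univ.erase j, v i * ‖A.map (algebraMap ℝ ℂ) i j‖
      = ∑ i ∈ Finset.univ.erase j, v i * A i j := by
        refine Finset.sum_congr rfl fun i hi ↦ ?_
        simp [abs_of_nonneg (hA i j (Finset.ne_of_mem_erase hi))]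
    _ < v j * (c - A j j) := by linarith [hvA j]
    _ = v j * (c - (A.map (algebraMap ℝ ℂ) j j).re) := by simp

end DiagonalDominance

/-- If `D` is an `N×N` nonnegative diagonal matrix, `R` is an `N×N`
nonnegative matrix, `π` is a strictly positive row vector, and there exists a
nonnegative row vector `v` with `v·D = π + v·R`, then every eigenvalue of `R - D`
has strictly negative real part. -/
theorem stmt_0 (N : ℕ) (hN : 1 ≤ N)
    (D R : Matrix (Fin N) (Fin N) ℝ)
    (hDdiag : D.IsDiag) (hDnonneg : ∀ i, 0 ≤ D i i)
    (hR : ∀ i j, 0 ≤ R i j)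
    (π : Fin N → ℝ) (hπ : ∀ i, 0 < π i)
    (hv : ∃ v : Fin N → ℝ, (∀ i, 0 ≤ v i) ∧ v ᵥ* D = π + v ᵥ* R) :
    ∀ μ ∈ spectrum ℂ ((R - D).map (algebraMap ℝ ℂ)), μ.re < 0 := by
  obtain ⟨v, hv0, hvD⟩ := hv
  exact stmt_0_general (fun i j hij ↦ by simpa [hDdiag hij] using hR i j) hv0
    fun j ↦ by simp [vecMul_sub, hvD, hπ j]
end

section
/- Let N ≥ 1, let D be an N×N real diagonal matrix with nonnegative diagonal entries, let R be an N×N real matrix with nonnegative entries, and let π ∈ ℝ^N be a row vector with all entries strictly positive. Assume there exists a row vector with nonnegative entries v̄₁ satisfying v̄₁·D = π + v̄₁·R. Let v₀(t) = π for all t, and for each integer m ≥ 1 let v_m : ℝ → ℝ^N be a differentiable function satisfying v_m'(t) = m·v_{m−1}(t) + v_m(t)·(R − D) for all t ≥ 0. Then D − R is invertible and, for every m ≥ 1, v_m(t) converges to m!·π·((D − R)^{-1})^m as t → ∞. -/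
open Matrix Filter Nat

/-!
The balance equation exhibits a nonnegative row vector `w` with `w (D - R) = π > 0`, which makes
`B = D - R` a nonsingular M-matrix. For such a matrix every entry of `w` is positive, and after
rescaling the coordinates by `w` all column sums of `B` are at least some `ε > 0`. Hence, once `K`
dominates the diagonal, `x ↦ K x - x B` is entrywise nonnegative with sup-norm at most `K - ε`, so
comparing `e^{K t} y(t)` with a scalar barrier shows that solutions of `y' = g - y B` with `g → 0`
tend to `0`. Subtracting the equilibrium `c B⁻¹`, solutions of `y' = f - y B` with `f → c` tend to
`c B⁻¹`, and the moments follow by induction with `f = (m + 1) v_m`.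
-/

open scoped Topology

section NormedSpace

variable {E : Type*} [NormedAddCommGroup E] [NormedSpace ℝ E] {y y' : ℝ → E} {K ε : ℝ}

theorem hasDerivAt_exp_mul_smul {z : E} {t : ℝ} (K : ℝ) (hy : HasDerivAt y z t) :
    HasDerivAt (fun s => Real.exp (K * s) • y s) (Real.exp (K * t) • (K • y t + z)) t := by
  have hexp : HasDerivAt (fun s => Real.exp (K * s)) (Real.exp (K * t) * K) t := by
    simpa using ((hasDerivAt_id t).const_mul K).exp
  refine (hexp.smul hy).congr_deriv ?_
  rw [smul_add, smul_smul, add_comm]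

theorem norm_le_add_mul_exp_of_norm_smul_add_deriv_lt {a b η : ℝ} (hab : a ≤ b)
    (hy : ∀ t ∈ Set.Icc a b, HasDerivAt y (y' t) t)
    (hlt : ∀ t ∈ Set.Ico a b, ‖K • y t + y' t‖ < (K - ε) * ‖y t‖ + ε * η) :
    ‖y b‖ ≤ η + (‖y a‖ - η) * Real.exp (-ε * (b - a)) := by
  set β : ℝ → ℝ := fun t => η + (‖y a‖ - η) * Real.exp (-ε * (t - a)) with hβ
  have hβ' (t : ℝ) : HasDerivAt β (-ε * (β t - η)) t := by
    have hexp : HasDerivAt (fun s => Real.exp (-ε * (s - a))) (Real.exp (-ε * (t - a)) * -ε) t := by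
      simpa using (((hasDerivAt_id t).sub_const a).const_mul (-ε)).exp
    refine ((hexp.const_mul (‖y a‖ - η)).const_add η).congr_deriv ?_
    simp only [hβ]
    ring
  have hf (t : ℝ) (ht : t ∈ Set.Icc a b) := hasDerivAt_exp_mul_smul K (hy t ht)
  have hnorm (t : ℝ) (x : E) : ‖Real.exp (K * t) • x‖ = Real.exp (K * t) * ‖x‖ := by
    rw [norm_smul, Real.norm_eq_abs, Real.abs_exp]
  have hbarrier : ‖Real.exp (K * b) • y b‖ ≤ Real.exp (K * b) * β b := by
    refine image_norm_le_of_norm_deriv_right_lt_deriv_boundary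
      (fun t ht => (hf t ht).continuousAt.continuousWithinAt)
      (fun t ht => (hf t (Set.Ico_subset_Icc_self ht)).hasDerivWithinAt)
      (by simp [hβ, hnorm]) (fun t => hasDerivAt_exp_mul_smul K (hβ' t))
      (fun t ht htouch => ?_) (Set.right_mem_Icc.2 hab)
    have hyβ : ‖y t‖ = β t := by
      rw [hnorm] at htouch
      exact mul_left_cancel₀ (Real.exp_ne_zero _) htouch
    rw [hnorm, smul_eq_mul, smul_eq_mul]
    refine mul_lt_mul_of_pos_left ((hlt t ht).trans_eq ?_) (Real.exp_pos _)
    rw [hyβ]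
    ring
  rw [hnorm] at hbarrier
  exact le_of_mul_le_mul_left hbarrier (Real.exp_pos _)

theorem tendsto_zero_of_norm_smul_add_deriv_le {h : ℝ → ℝ} (hε : 0 < ε)
    (hy : ∀ᶠ t in atTop, HasDerivAt y (y' t) t)
    (hle : ∀ᶠ t in atTop, ‖K • y t + y' t‖ ≤ (K - ε) * ‖y t‖ + h t)
    (hh : Tendsto h atTop (𝓝 0)) : Tendsto y atTop (𝓝 0) := by
  refine NormedAddGroup.tendsto_nhds_zero.2 fun δ hδ => ?_
  have hsmall : ∀ᶠ t in atTop, h t < ε * (δ / 2) := hh.eventually_lt_const (by positivity)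
  obtain ⟨T, hT⟩ := (hy.and (hle.and hsmall)).exists_forall_of_atTop
  have hbound : ∀ᶠ t in atTop, ‖y t‖ ≤ δ / 2 + (‖y T‖ - δ / 2) * Real.exp (-ε * (t - T)) := by
    filter_upwards [eventually_ge_atTop T] with t ht
    exact norm_le_add_mul_exp_of_norm_smul_add_deriv_lt ht (fun s hs => (hT s hs.1).1)
      fun s hs => (hT s hs.1).2.1.trans_lt (by linarith [(hT s hs.1).2.2])
  have hexp : Tendsto (fun t => Real.exp (-ε * (t - T))) atTop (𝓝 0) :=
    Real.tendsto_exp_atBot.comp ((tendsto_atTop_add_const_right _ (-T)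
      tendsto_id).const_mul_atTop_of_neg (neg_neg_of_pos hε))
  have hlim : Tendsto (fun t => δ / 2 + (‖y T‖ - δ / 2) * Real.exp (-ε * (t - T))) atTop
      (𝓝 (δ / 2)) := by
    simpa using (hexp.const_mul (‖y T‖ - δ / 2)).const_add (δ / 2)
  filter_upwards [hbound, hlim.eventually_lt_const (half_lt_self hδ)] with t ht ht'
  exact ht.trans_lt ht'

end NormedSpace

section Matrix

theorem hasDerivAt_vecMul_const {𝕜 m n : Type*} [NontriviallyNormedField 𝕜] [CompleteSpace 𝕜]
    [Fintype m] [Finite n] {y : 𝕜 → m → 𝕜} {y' : m → 𝕜} {t : 𝕜} (hy : HasDerivAt y y' t)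
    (A : Matrix m n 𝕜) : HasDerivAt (fun s => y s ᵥ* A) (y' ᵥ* A) t := by
  have := Fintype.ofFinite n
  exact A.vecMulLinear.toContinuousLinearMap.hasFDerivAt.comp_hasDerivAt t hy

theorem tendsto_vecMul_const {α R m n : Type*} [NonUnitalNonAssocSemiring R] [TopologicalSpace R]
    [ContinuousAdd R] [ContinuousMul R] [Fintype m] {l : Filter α} {y : α → m → R} {c : m → R}
    (hy : Tendsto y l (𝓝 c)) (A : Matrix m n R) : Tendsto (fun s => y s ᵥ* A) l (𝓝 (c ᵥ* A)) :=
  ((continuous_id.matrix_vecMul continuous_const).tendsto c).comp hy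

variable {ι : Type*} [Fintype ι]

theorem norm_smul_sub_vecMul_le {B : Matrix ι ι ℝ} {K ε : ℝ}
    (hoff : Pairwise fun i j => B i j ≤ 0) (hdiag : ∀ j, B j j ≤ K)
    (hsum : ∀ j, ε ≤ ∑ i, B i j) (x : ι → ℝ) :
    ‖K • x - x ᵥ* B‖ ≤ (K - ε) * ‖x‖ := by
  classical
  rcases isEmpty_or_nonempty ι
  · simp [Subsingleton.elim x 0]
  refine (pi_norm_le_iff_of_nonempty _).2 fun j => ?_
  have hnonneg (i : ι) : 0 ≤ (K • (1 : Matrix ι ι ℝ) - B) i j := by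
    rcases eq_or_ne i j with rfl | hij
    · simpa using hdiag i
    · simpa [hij] using hoff hij
  calc ‖(K • x - x ᵥ* B) j‖ = ‖∑ i, x i * (K • (1 : Matrix ι ι ℝ) - B) i j‖ := by
        rw [← vecMul_one x, ← vecMul_smul, vecMul_one, ← vecMul_sub]; rfl
    _ ≤ ∑ i, ‖x‖ * (K • (1 : Matrix ι ι ℝ) - B) i j := norm_sum_le_of_le _ fun i _ => by
        rw [norm_mul, Real.norm_of_nonneg (hnonneg i)]
        exact mul_le_mul_of_nonneg_right (norm_le_pi_norm x i) (hnonneg i)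
    _ = (K - ∑ i, B i j) * ‖x‖ := by
        rw [← Finset.mul_sum, mul_comm]
        simp [Finset.sum_sub_distrib, one_apply]
    _ ≤ (K - ε) * ‖x‖ := by gcongr; exact hsum j

theorem tendsto_zero_of_hasDerivAt_sub_vecMul_of_le_sum_col {B : Matrix ι ι ℝ} {ε : ℝ}
    {y g : ℝ → ι → ℝ} (hε : 0 < ε) (hoff : Pairwise fun i j => B i j ≤ 0)
    (hsum : ∀ j, ε ≤ ∑ i, B i j)
    (hy : ∀ᶠ t in atTop, HasDerivAt y (g t - y t ᵥ* B) t) (hg : Tendsto g atTop (𝓝 0)) :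
    Tendsto y atTop (𝓝 0) := by
  obtain ⟨K, hK⟩ : ∃ K, ∀ j, B j j ≤ K :=
    (eventually_all.2 fun j => eventually_ge_atTop (B j j)).exists
  refine tendsto_zero_of_norm_smul_add_deriv_le (K := K) hε hy (.of_forall fun t => ?_)
    (tendsto_zero_iff_norm_tendsto_zero.1 hg)
  calc ‖K • y t + (g t - y t ᵥ* B)‖ = ‖(K • y t - y t ᵥ* B) + g t‖ := by congr 1; abel
    _ ≤ ‖K • y t - y t ᵥ* B‖ + ‖g t‖ := norm_add_le _ _
    _ ≤ (K - ε) * ‖y t‖ + ‖g t‖ := by gcongr; exact norm_smul_sub_vecMul_le hoff hK hsum _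

/-- Nonsingular M-matrices, through their characterisation by semipositivity: the off-diagonal
entries are nonpositive and some nonnegative row vector is mapped to a strictly positive one. -/
structure IsNonsingularMMatrix (B : Matrix ι ι ℝ) : Prop where
  offDiag_nonpos : Pairwise fun i j => B i j ≤ 0
  semipositive : ∃ w : ι → ℝ, (∀ i, 0 ≤ w i) ∧ ∀ j, 0 < (w ᵥ* B) j

namespace IsNonsingularMMatrix

variable {B : Matrix ι ι ℝ}

theorem sub_of_isDiag {D R : Matrix ι ι ℝ} {π w : ι → ℝ} (hD : D.IsDiag)
    (hR : ∀ i j, 0 ≤ R i j) (hπ : ∀ i, 0 < π i) (hw : ∀ i, 0 ≤ w i)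
    (hbalance : w ᵥ* D = π + w ᵥ* R) : IsNonsingularMMatrix (D - R) where
  offDiag_nonpos i j hij := by simpa [hD hij] using hR i j
  semipositive := ⟨w, hw, fun j => by simpa [vecMul_sub, hbalance] using hπ j⟩

theorem exists_pos_mul_le (hB : IsNonsingularMMatrix B) :
    ∃ w : ι → ℝ, (∀ i, 0 < w i) ∧ ∃ ε > 0, ∀ j, ε * w j ≤ (w ᵥ* B) j := by
  classical
  obtain ⟨w, hw, hwB⟩ := hB.semipositive
  refine ⟨w, fun j => (hw j).lt_of_ne' fun hj => (hwB j).not_ge ?_, ?_⟩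
  · refine Finset.sum_nonpos fun i _ => ?_
    rcases eq_or_ne i j with rfl | hij
    · simp [hj]
    · exact mul_nonpos_of_nonneg_of_nonpos (hw i) (hB.offDiag_nonpos hij)
  · have hsmall (j : ι) : ∀ᶠ ε in 𝓝[>] (0 : ℝ), ε * w j ≤ (w ᵥ* B) j := by
      have hlim : Tendsto (fun ε : ℝ => ε * w j) (𝓝[>] 0) (𝓝 0) := by
        simpa using (tendsto_id.mul_const (w j)).mono_left (nhdsWithin_le_nhds (a := (0 : ℝ)))
      exact hlim.eventually_le_const (hwB j)
    exact (eventually_mem_nhdsWithin.and (eventually_all.2 hsmall)).exists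

theorem tendsto_zero_of_hasDerivAt (hB : IsNonsingularMMatrix B) {y g : ℝ → ι → ℝ}
    (hy : ∀ᶠ t in atTop, HasDerivAt y (g t - y t ᵥ* B) t) (hg : Tendsto g atTop (𝓝 0)) :
    Tendsto y atTop (𝓝 0) := by
  classical
  obtain ⟨w, hw, ε, hε, hwB⟩ := hB.exists_pos_mul_le
  have hcancel : diagonal w⁻¹ * diagonal w = 1 := by
    simp [diagonal_mul_diagonal, (hw _).ne']
  have hconj : diagonal w⁻¹ * (diagonal w * B * diagonal w⁻¹) = B * diagonal w⁻¹ := by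
    rw [← mul_assoc, ← mul_assoc, hcancel, one_mul]
  have hscaled : Tendsto (fun t => y t ᵥ* diagonal w⁻¹) atTop (𝓝 0) := by
    refine tendsto_zero_of_hasDerivAt_sub_vecMul_of_le_sum_col
      (B := diagonal w * B * diagonal w⁻¹) (g := fun t => g t ᵥ* diagonal w⁻¹) hε
      (fun i j hij => ?_) (fun j => ?_) ?_ (by simpa using tendsto_vecMul_const hg (diagonal w⁻¹))
    · simp only [mul_diagonal, diagonal_mul]
      exact mul_nonpos_of_nonpos_of_nonneg (mul_nonpos_of_nonneg_of_nonpos (hw i).le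
        (hB.offDiag_nonpos hij)) (inv_nonneg.2 (hw j).le)
    · simp only [mul_diagonal, diagonal_mul, Pi.inv_apply, ← Finset.sum_mul]
      exact (le_mul_inv_iff₀ (hw j)).2 (hwB j)
    · filter_upwards [hy] with t ht
      simpa only [sub_vecMul, vecMul_vecMul, hconj] using hasDerivAt_vecMul_const ht (diagonal w⁻¹)
  simpa [vecMul_vecMul, hcancel] using tendsto_vecMul_const hscaled (diagonal w)

variable [DecidableEq ι]

theorem isUnit (hB : IsNonsingularMMatrix B) : IsUnit B := by
  obtain ⟨w, hw, ε, hε, hwB⟩ := hB.exists_pos_mul_le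
  have hdom (j : ι) : ∑ i ∈ Finset.univ.erase j, ‖(diagonal w * B) i j‖ <
      ‖(diagonal w * B) j j‖ := by
    have hoff : ∑ i ∈ Finset.univ.erase j, ‖(diagonal w * B) i j‖ =
        -∑ i ∈ Finset.univ.erase j, w i * B i j := by
      rw [← Finset.sum_neg_distrib]
      refine Finset.sum_congr rfl fun i hi => ?_
      rw [diagonal_mul, Real.norm_of_nonpos (mul_nonpos_of_nonneg_of_nonpos (hw i).le
        (hB.offDiag_nonpos (Finset.ne_of_mem_erase hi)))]
    have hsum : w j * B j j + ∑ i ∈ Finset.univ.erase j, w i * B i j = (w ᵥ* B) j :=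
      Finset.add_sum_erase _ (fun i => w i * B i j) (Finset.mem_univ j)
    have hpos : 0 < ε * w j := mul_pos hε (hw j)
    rw [hoff, diagonal_mul]
    refine lt_of_lt_of_le ?_ (Real.le_norm_self _)
    linarith [hwB j]
  have hdet := det_ne_zero_of_sum_col_lt_diag hdom
  rw [det_mul] at hdet
  exact (isUnit_iff_isUnit_det B).2 (right_ne_zero_of_mul hdet).isUnit

theorem tendsto_vecMul_inv_of_hasDerivAt (hB : IsNonsingularMMatrix B) {y f : ℝ → ι → ℝ}
    {c : ι → ℝ} (hy : ∀ᶠ t in atTop, HasDerivAt y (f t - y t ᵥ* B) t)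
    (hf : Tendsto f atTop (𝓝 c)) : Tendsto y atTop (𝓝 (c ᵥ* B⁻¹)) := by
  have hequilibrium : (c ᵥ* B⁻¹) ᵥ* B = c := by
    rw [vecMul_vecMul, nonsing_inv_mul _ ((isUnit_iff_isUnit_det B).1 hB.isUnit), vecMul_one]
  refine tendsto_sub_nhds_zero_iff.1 (hB.tendsto_zero_of_hasDerivAt (g := fun t => f t - c) ?_
    (tendsto_sub_nhds_zero_iff.2 hf))
  filter_upwards [hy] with t ht
  simpa only [sub_vecMul, hequilibrium, sub_sub_sub_cancel_right] using ht.sub_const (c ᵥ* B⁻¹)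

end IsNonsingularMMatrix

theorem stmt_4_general [DecidableEq ι] {B : Matrix ι ι ℝ} (hB : IsNonsingularMMatrix B)
    {p : ι → ℝ} {v : ℕ → ℝ → ι → ℝ} (hv0 : Tendsto (v 0) atTop (𝓝 p))
    (hode : ∀ m : ℕ, ∀ᶠ t in atTop,
      HasDerivAt (v (m + 1)) (((m + 1 : ℕ) : ℝ) • v m t - v (m + 1) t ᵥ* B) t) :
    IsUnit B ∧ ∀ m : ℕ, Tendsto (v m) atTop (𝓝 ((m ! : ℝ) • (p ᵥ* (B⁻¹ ^ m)))) := by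
  refine ⟨hB.isUnit, fun m => ?_⟩
  induction m with
  | zero => simpa using hv0
  | succ m ih =>
    have hlim := hB.tendsto_vecMul_inv_of_hasDerivAt (hode m) (ih.const_smul ((m + 1 : ℕ) : ℝ))
    rwa [smul_smul, ← Nat.cast_mul, ← factorial_succ, smul_vecMul, vecMul_vecMul, ← pow_succ]
      at hlim

end Matrix

/-- With `D` nonnegative diagonal, `R` nonnegative, `π` strictly
positive, and a nonnegative fixed point `v̄₁` of the first-moment balance
equation, the hierarchy of moment differential equations
`v_m'(t) = m·v_{m-1}(t) + v_m(t)·(R - D)` (with `v₀ ≡ π`) has each `v_m(t)`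
converging to `m!·π·((D - R)⁻¹)^m`, and `D - R` is invertible. -/
theorem stmt_4 (N : ℕ) (hN : 1 ≤ N)
    (D R : Matrix (Fin N) (Fin N) ℝ)
    (hDdiag : D.IsDiag) (hDnonneg : ∀ i, 0 ≤ D i i)
    (hR : ∀ i j, 0 ≤ R i j)
    (π : Fin N → ℝ) (hπ : ∀ i, 0 < π i)
    (hfix : ∃ vbar : Fin N → ℝ, (∀ i, 0 ≤ vbar i) ∧ vbar ᵥ* D = π + vbar ᵥ* R)
    (v : ℕ → ℝ → Fin N → ℝ)
    (hv0 : ∀ t : ℝ, v 0 t = π)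
    (hode : ∀ m : ℕ, 1 ≤ m → ∀ t : ℝ, 0 ≤ t →
      HasDerivAt (v m) ((m : ℝ) • v (m - 1) t + (v m t) ᵥ* (R - D)) t) :
    IsUnit (D - R) ∧
      ∀ m : ℕ, 1 ≤ m →
        Tendsto (v m) atTop (nhds ((m ! : ℝ) • (π ᵥ* ((D - R)⁻¹ ^ m)))) := by
  obtain ⟨w, hw, hbalance⟩ := hfix
  have hB := IsNonsingularMMatrix.sub_of_isDiag hDdiag hR hπ hw hbalance
  refine (stmt_4_general hB (tendsto_const_nhds.congr fun t => (hv0 t).symm) fun m => ?_).imp_right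
    fun h m _ => h m
  filter_upwards [eventually_ge_atTop 0] with t ht
  simpa only [← neg_sub D R, vecMul_neg, ← sub_eq_add_neg, Nat.add_sub_cancel] using
    hode (m + 1) m.succ_pos t ht
end

section
/- Let N ≥ 1, let D be an N×N real diagonal matrix with nonnegative diagonal entries, let R and R̂ be N×N real matrices with nonnegative entries, and let π ∈ ℝ^N be a row vector with all entries strictly positive. Assume there exists a row vector with nonnegative entries v̄₁ satisfying v̄₁·D = π + v̄₁·R. Then there exists s₀ > 0 such that for every real s < s₀: the matrix D − R − s·I is invertible, and every differentiable function w : ℝ → ℝ^N satisfying w'(t) = s·w(t) + w(t)·(R − D) + π·R̂ for all t ≥ 0 converges, as t → ∞, to π·R̂·(D − R − s·I)^{-1}. -/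
open Matrix Filter

/-!
The system `w' = s w + w (R - D) + π R̂` is affine with matrix `R - D + s I`, whose off-diagonal
entries are nonnegative. The first-moment equation says that `v̄ (R - D) = -π` is negative, which
forces `v̄` to be positive; by finiteness `v̄ (R - D) ≤ -s₀ v̄` for some `s₀ > 0`, hence
`v̄ (R - D + s I) ≤ (s - s₀) v̄`.

For a matrix `M` with nonnegative off-diagonal entries and `v M ≤ κ v`, solutions of `x' = x M`
grow at most like `exp (κ t)` in the weighted sup norm `‖x / v‖`: replacing `x` by `exp (c t) x`
replaces `M` by `M + c I`, which is entrywise nonnegative for large `c`, and an entrywise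
nonnegative matrix `B` with `v B ≤ κ v` has operator norm at most `κ` in that norm, so that
Grönwall's inequality applies. For `κ < 0` every solution decays. A vector in the kernel is a
constant solution, so `M` is invertible, and the difference of a solution of the affine system
from the equilibrium decays.
-/

open scoped Topology

/-- A Metzler matrix: a square matrix with nonnegative off-diagonal entries, that is, the negative
of a Z-matrix. These are the generators of linear systems that preserve the nonnegative orthant. -/
def IsMetzler {ι 𝕜 : Type*} [Zero 𝕜] [LE 𝕜] (M : Matrix ι ι 𝕜) : Prop :=
  Pairwise fun i j => 0 ≤ M i j

section OrderedAlgebra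

variable {m n ι 𝕜 : Type*}

lemma vecMul_add_smul_one [Fintype ι] [DecidableEq ι] [CommSemiring 𝕜] (M : Matrix ι ι 𝕜) (c : 𝕜)
    (x : ι → 𝕜) : x ᵥ* (M + c • 1) = x ᵥ* M + c • x := by
  rw [vecMul_add, vecMul_smul, vecMul_one]

lemma vecMul_le_vecMul_of_nonneg [Fintype m] [Semiring 𝕜] [PartialOrder 𝕜] [IsOrderedRing 𝕜]
    {B : Matrix m n 𝕜} (hB : ∀ i j, 0 ≤ B i j) {x y : m → 𝕜} (hxy : x ≤ y) :
    x ᵥ* B ≤ y ᵥ* B := fun j =>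
  dotProduct_le_dotProduct_of_nonneg_right hxy fun i => hB i j

lemma abs_vecMul_le [Fintype m] [Ring 𝕜] [LinearOrder 𝕜] [IsOrderedRing 𝕜]
    {B : Matrix m n 𝕜} (hB : ∀ i j, 0 ≤ B i j) (x : m → 𝕜) : |x ᵥ* B| ≤ |x| ᵥ* B := fun j =>
  calc |∑ i, x i * B i j| ≤ ∑ i, |x i * B i j| := Finset.abs_sum_le_sum_abs _ _
    _ = ∑ i, |x i| * B i j := by simp only [abs_mul, abs_of_nonneg (hB _ j)]

namespace IsMetzler

lemma add_smul_one [DecidableEq ι] [Semiring 𝕜] [LE 𝕜] {M : Matrix ι ι 𝕜} (hM : IsMetzler M)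
    (c : 𝕜) : IsMetzler (M + c • 1) := fun i j hij => by
  simpa [hij] using hM hij

lemma exists_add_smul_one_nonneg [Finite ι] [DecidableEq ι] [Ring 𝕜] [LinearOrder 𝕜]
    [IsOrderedRing 𝕜] {M : Matrix ι ι 𝕜} (hM : IsMetzler M) :
    ∃ c : 𝕜, ∀ i j, 0 ≤ (M + c • (1 : Matrix ι ι 𝕜)) i j := by
  obtain ⟨c, hc⟩ := (Set.finite_range fun i => -M i i).bddAbove
  refine ⟨c, fun i j => ?_⟩
  obtain rfl | hij := eq_or_ne i j
  · simpa [neg_le_iff_add_nonneg'] using hc ⟨i, rfl⟩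
  · exact hM.add_smul_one c hij

lemma pos_of_vecMul_neg [Fintype ι] [Semiring 𝕜] [PartialOrder 𝕜] [IsOrderedRing 𝕜]
    {M : Matrix ι ι 𝕜} (hM : IsMetzler M) {v : ι → 𝕜} (hv : 0 ≤ v)
    (hvM : ∀ j, (v ᵥ* M) j < 0) (j : ι) : 0 < v j := by
  refine (hv j).lt_of_ne' fun hj => (hvM j).not_ge (Finset.sum_nonneg fun i _ => ?_)
  obtain rfl | hij := eq_or_ne i j
  · simp [hj]
  · exact mul_nonneg (hv i) (hM hij)

end IsMetzler

end OrderedAlgebra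

lemma exists_pos_smul_le {ι : Type*} [Finite ι] {u : ι → ℝ} (hu : ∀ i, 0 < u i) (v : ι → ℝ) :
    ∃ δ : ℝ, 0 < δ ∧ δ • v ≤ u := by
  have small (i : ι) : ∀ᶠ δ in 𝓝[>] (0 : ℝ), δ * v i ≤ u i := by
    have mul_tendsto_zero : Tendsto (fun δ => δ * v i) (𝓝[>] 0) (𝓝 0) :=
      ((continuous_mul_const (v i)).tendsto' 0 0 (zero_mul _)).mono_left nhdsWithin_le_nhds
    exact mul_tendsto_zero.eventually_le_const (hu i)
  exact (eventually_mem_nhdsWithin.and (eventually_all.2 small)).exists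

section LinearSystem

variable {ι : Type*} [Fintype ι] {M : Matrix ι ι ℝ} {v : ι → ℝ} {κ : ℝ}

lemma norm_vecMul_div_le {B : Matrix ι ι ℝ} (hB : ∀ i j, 0 ≤ B i j) (hv : ∀ i, 0 < v i)
    (hvB : v ᵥ* B ≤ κ • v) (x : ι → ℝ) : ‖(x ᵥ* B) / v‖ ≤ κ * ‖x / v‖ := by
  cases isEmpty_or_nonempty ι
  · simp [Subsingleton.elim _ (0 : ι → ℝ)]
  have abs_le_smul : |x| ≤ ‖x / v‖ • v := fun i => by
    simpa [abs_div, abs_of_pos (hv i), div_le_iff₀ (hv i)] using norm_le_pi_norm (x / v) i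
  have abs_vecMul_le_smul : |x ᵥ* B| ≤ (κ * ‖x / v‖) • v :=
    calc |x ᵥ* B| ≤ |x| ᵥ* B := abs_vecMul_le hB x
      _ ≤ (‖x / v‖ • v) ᵥ* B := vecMul_le_vecMul_of_nonneg hB abs_le_smul
      _ = ‖x / v‖ • (v ᵥ* B) := smul_vecMul _ _ _
      _ ≤ ‖x / v‖ • κ • v := smul_le_smul_of_nonneg_left hvB (norm_nonneg _)
      _ = (κ * ‖x / v‖) • v := by rw [smul_smul, mul_comm]
  refine (pi_norm_le_iff_of_nonempty _).2 fun i => ?_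
  simpa [abs_div, abs_of_pos (hv i), div_le_iff₀ (hv i)] using abs_vecMul_le_smul i

lemma norm_div_le_of_isIntegralCurveOn_of_nonneg {B : Matrix ι ι ℝ} (hB : ∀ i j, 0 ≤ B i j)
    (hv : ∀ i, 0 < v i) (hvB : v ᵥ* B ≤ κ • v) {x : ℝ → ι → ℝ}
    (hx : IsIntegralCurveOn x (fun _ y => y ᵥ* B) (Set.Ici 0)) {t : ℝ} (ht : 0 ≤ t) :
    ‖x t / v‖ ≤ ‖x 0 / v‖ * Real.exp (κ * t) := by
  have hasDeriv_div (u : ℝ) (hu : 0 ≤ u) :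
      HasDerivWithinAt (fun u => x u / v) ((x u ᵥ* B) / v) (Set.Ici 0) u :=
    hasDerivWithinAt_pi.2 fun i => (hasDerivWithinAt_pi.1 (hx u hu) i).div_const (v i)
  have gronwall := norm_le_gronwallBound_of_norm_deriv_right_le (δ := ‖x 0 / v‖) (ε := 0) (b := t)
    (fun u hu => (hasDeriv_div u hu.1).continuousWithinAt.mono Set.Icc_subset_Ici_self)
    (fun u hu => (hasDeriv_div u hu.1).mono (Set.Ici_subset_Ici.2 hu.1)) le_rfl
    (fun u _ => by simpa using norm_vecMul_div_le hB hv hvB (x u)) t ⟨ht, le_rfl⟩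
  simpa [gronwallBound_ε0] using gronwall

lemma isIntegralCurveOn_exp_smul_vecMul [DecidableEq ι] {x : ℝ → ι → ℝ} {s : Set ℝ}
    (hx : IsIntegralCurveOn x (fun _ y => y ᵥ* M) s) (c : ℝ) :
    IsIntegralCurveOn (fun t => Real.exp (c * t) • x t) (fun _ y => y ᵥ* (M + c • 1)) s := by
  intro t ht
  have exp_deriv : HasDerivWithinAt (fun t => Real.exp (c * t)) (Real.exp (c * t) * c) s t := by
    simpa using ((hasDerivWithinAt_id t s).const_mul c).exp
  refine (exp_deriv.smul (hx t ht)).congr_deriv ?_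
  simp only [vecMul_add_smul_one, smul_vecMul, smul_smul, mul_comm c]

namespace IsMetzler

lemma norm_div_le (hM : IsMetzler M) (hv : ∀ i, 0 < v i) (hvM : v ᵥ* M ≤ κ • v) {x : ℝ → ι → ℝ}
    (hx : IsIntegralCurveOn x (fun _ y => y ᵥ* M) (Set.Ici 0)) {t : ℝ} (ht : 0 ≤ t) :
    ‖x t / v‖ ≤ ‖x 0 / v‖ * Real.exp (κ * t) := by
  classical
  obtain ⟨c, hc⟩ := hM.exists_add_smul_one_nonneg
  have hvc : v ᵥ* (M + c • 1) ≤ (κ + c) • v := by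
    rw [vecMul_add_smul_one, add_smul]
    gcongr
  have bound := norm_div_le_of_isIntegralCurveOn_of_nonneg hc hv hvc
    (isIntegralCurveOn_exp_smul_vecMul hx c) ht
  simp only [smul_div_assoc, norm_smul, Real.norm_eq_abs, Real.abs_exp, mul_zero, Real.exp_zero,
    add_mul, Real.exp_add] at bound
  refine le_of_mul_le_mul_left (bound.trans_eq ?_) (Real.exp_pos (c * t))
  ring

lemma tendsto_zero (hM : IsMetzler M) (hv : ∀ i, 0 < v i) (hvM : v ᵥ* M ≤ κ • v) (hκ : κ < 0)
    {x : ℝ → ι → ℝ} (hx : IsIntegralCurveOn x (fun _ y => y ᵥ* M) (Set.Ici 0)) :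
    Tendsto x atTop (𝓝 0) := by
  have exp_decay : Tendsto (fun t => ‖x 0 / v‖ * Real.exp (κ * t)) atTop (𝓝 0) := by
    simpa using (Real.tendsto_exp_atBot.comp (tendsto_id.const_mul_atTop_of_neg hκ)).const_mul
      ‖x 0 / v‖
  have div_tendsto : Tendsto (fun t => x t / v) atTop (𝓝 0) :=
    squeeze_zero_norm' ((eventually_ge_atTop 0).mono fun _ => hM.norm_div_le hv hvM hx) exp_decay
  have div_mul (t : ℝ) : x t / v * v = x t := funext fun i => div_mul_cancel₀ _ (hv i).ne'
  simpa [div_mul] using div_tendsto.mul_const v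

lemma isUnit [DecidableEq ι] (hM : IsMetzler M) (hv : ∀ i, 0 < v i) (hvM : v ᵥ* M ≤ κ • v)
    (hκ : κ < 0) : IsUnit M := by
  refine vecMul_injective_iff_isUnit.1 <|
    (injective_iff_map_eq_zero M.vecMulLinear).2 fun x hx => ?_
  have const_curve := isIntegralCurve_const (v := fun _ y => y ᵥ* M) fun _ => hx
  exact tendsto_nhds_unique tendsto_const_nhds
    (hM.tendsto_zero hv hvM hκ (const_curve.isIntegralCurveOn _))

lemma tendsto_equilibrium (hM : IsMetzler M) (hv : ∀ i, 0 < v i) (hvM : v ᵥ* M ≤ κ • v)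
    (hκ : κ < 0) {b q : ι → ℝ} (hq : q ᵥ* M + b = 0) {w : ℝ → ι → ℝ}
    (hw : IsIntegralCurveOn w (fun _ y => y ᵥ* M + b) (Set.Ici 0)) :
    Tendsto w atTop (𝓝 q) := by
  have sub_curve : IsIntegralCurveOn (fun t => w t - q) (fun _ y => y ᵥ* M) (Set.Ici 0) :=
    fun t ht => ((hw t ht).sub_const q).congr_deriv <| by
      simp only [sub_vecMul, eq_neg_of_add_eq_zero_left hq, sub_neg_eq_add]
  simpa using (hM.tendsto_zero hv hvM hκ sub_curve).add_const q

end IsMetzler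

end LinearSystem

theorem stmt_5_general {ι : Type*} [Fintype ι] [DecidableEq ι] {M : Matrix ι ι ℝ}
    (hM : IsMetzler M) {v : ι → ℝ} (hv : 0 ≤ v) (hvM : ∀ j, (v ᵥ* M) j < 0) :
    ∃ s₀ : ℝ, 0 < s₀ ∧ ∀ s : ℝ, s < s₀ →
      IsUnit (-M - s • (1 : Matrix ι ι ℝ)) ∧
      ∀ (b : ι → ℝ) (w : ℝ → ι → ℝ),
        IsIntegralCurveOn w (fun _ y => s • y + y ᵥ* M + b) (Set.Ici 0) →
        Tendsto w atTop (𝓝 (b ᵥ* (-M - s • (1 : Matrix ι ι ℝ))⁻¹)) := by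
  have hv_pos := hM.pos_of_vecMul_neg hv hvM
  obtain ⟨s₀, hs₀, hs₀v⟩ := exists_pos_smul_le (u := -(v ᵥ* M)) (fun j => neg_pos.2 (hvM j)) v
  refine ⟨s₀, hs₀, fun s hs => ?_⟩
  have shift_metzler := hM.add_smul_one s
  have hvs : v ᵥ* (M + s • 1) ≤ (s - s₀) • v := by
    rw [vecMul_add_smul_one, sub_smul, sub_eq_neg_add]
    gcongr
    exact le_neg_of_le_neg hs₀v
  have hunit : IsUnit (-(M + s • 1)) := (shift_metzler.isUnit hv_pos hvs (sub_neg.2 hs)).neg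
  rw [← neg_add']
  refine ⟨hunit, fun b w hw => ?_⟩
  have equilibrium : (b ᵥ* (-(M + s • 1))⁻¹) ᵥ* (M + s • 1) + b = 0 := by
    rw [← neg_neg (M + s • 1), vecMul_neg, neg_neg, vecMul_vecMul,
      nonsing_inv_mul _ ((isUnit_iff_isUnit_det _).1 hunit), vecMul_one, neg_add_cancel]
  refine shift_metzler.tendsto_equilibrium hv_pos hvs (sub_neg.2 hs) equilibrium ?_
  simpa only [vecMul_add_smul_one, add_comm (_ ᵥ* M)] using hw

/-- With `D` nonnegative diagonal, `R, R̂` nonnegative, `π` strictly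
positive, and a nonnegative fixed point of the first-moment balance equation,
there exists `s₀ > 0` such that for all `s < s₀` the matrix `D - R - s·I` is
invertible and every solution of `w'(t) = s·w(t) + w(t)·(R - D) + π·R̂` on
`t ≥ 0` converges to `π·R̂·(D - R - s·I)⁻¹`. -/
theorem stmt_5 (N : ℕ) (hN : 1 ≤ N)
    (D R Rhat : Matrix (Fin N) (Fin N) ℝ)
    (hDdiag : D.IsDiag) (hDnonneg : ∀ i, 0 ≤ D i i)
    (hR : ∀ i j, 0 ≤ R i j) (hRhat : ∀ i j, 0 ≤ Rhat i j)
    (π : Fin N → ℝ) (hπ : ∀ i, 0 < π i)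
    (hfix : ∃ vbar : Fin N → ℝ, (∀ i, 0 ≤ vbar i) ∧ vbar ᵥ* D = π + vbar ᵥ* R) :
    ∃ s₀ : ℝ, 0 < s₀ ∧ ∀ s : ℝ, s < s₀ →
      IsUnit (D - R - s • (1 : Matrix (Fin N) (Fin N) ℝ)) ∧
      ∀ w : ℝ → Fin N → ℝ,
        (∀ t : ℝ, 0 ≤ t → HasDerivAt w (s • w t + (w t) ᵥ* (R - D) + π ᵥ* Rhat) t) →
        Tendsto w atTop
          (nhds ((π ᵥ* Rhat) ᵥ* (D - R - s • (1 : Matrix (Fin N) (Fin N) ℝ))⁻¹)) := by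
  obtain ⟨v, hv, hv_eq⟩ := hfix
  have hM : IsMetzler (R - D) := fun i j hij => by simpa [hDdiag hij] using hR i j
  have hvM : v ᵥ* (R - D) = -π := by rw [vecMul_sub, hv_eq, sub_add_cancel_right]
  obtain ⟨s₀, hs₀, h⟩ := stmt_5_general hM hv fun j => by simpa [hvM] using hπ j
  rw [neg_sub] at h
  exact ⟨s₀, hs₀, fun s hs => ⟨(h s hs).1, fun w hw =>
    (h s hs).2 _ w fun t ht => (hw t ht).hasDerivWithinAt⟩⟩
end

section
/- Let n ≥ 1, let μ₀, …, μ_{n−1} be strictly positive reals, and let s be a real number with s < μᵢ for all i. Let M be the n×n real matrix (rows and columns indexed 0, …, n−1) with M_{ii} = μᵢ − s, M_{i,i+1} = −μ_{i+1} for 0 ≤ i ≤ n−2, and all other entries zero. Then M is invertible and its inverse has entries (M^{-1})_{ij} = (1/(μᵢ − s))·∏_{k=i+1}^{j} μ_k/(μ_k − s) for i ≤ j, and (M^{-1})_{ij} = 0 for i > j (the product is empty, hence 1, when j = i). -/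
open Matrix Finset

/-! Let `D = diagonal d`, let `S c` be the matrix with entries `c j` just above the diagonal, and
put `c = u / d`. Then `D - S u = (1 - S c) * D`, so everything reduces to inverting `1 - S c`. Its
inverse has as `(i, j)` entry the product of the weights `c k` along the path from `i` up to `j`:
multiplying by `S c` prepends a step, so `S c` times this matrix of path weights keeps exactly the
nontrivial paths, and the difference is the identity. -/

section Superdiagonal

variable {ι R : Type*}

open Classical in
/-- The matrix whose only nonzero entries are `u j` at the positions `(i, j)` with `j` the immediate
successor of `i`. The weights are indexed by the column. -/
noncomputable def superdiagonal [Preorder ι] [Zero R] (u : ι → R) : Matrix ι ι R :=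
  of fun i j => if i ⋖ j then u j else 0

/-- The matrix of path weights: its `(i, j)` entry is the weight of the path from `i` up to `j`
through all intermediate indices when each step into `k` weighs `c k`, and `0` if `j < i`. -/
def pathWeight [LinearOrder ι] [LocallyFiniteOrder ι] [CommMonoidWithZero R] (c : ι → R) :
    Matrix ι ι R :=
  of fun i j => if i ≤ j then ∏ k ∈ Ioc i j, c k else 0

lemma superdiagonal_apply_of_covBy [Preorder ι] [Zero R] (u : ι → R) {i j : ι} (h : i ⋖ j) :
    superdiagonal u i j = u j :=
  if_pos h

lemma superdiagonal_apply_of_not_covBy [Preorder ι] [Zero R] (u : ι → R) {i j : ι}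
    (h : ¬i ⋖ j) : superdiagonal u i j = 0 :=
  if_neg h

lemma superdiagonal_mul_diagonal [Preorder ι] [Fintype ι] [DecidableEq ι]
    [NonUnitalNonAssocSemiring R] (u d : ι → R) :
    superdiagonal u * diagonal d = superdiagonal (u * d) := by
  ext i j
  by_cases h : i ⋖ j
  · simp only [mul_diagonal, superdiagonal_apply_of_covBy _ h, Pi.mul_apply]
  · simp only [mul_diagonal, superdiagonal_apply_of_not_covBy _ h, zero_mul]

lemma superdiagonal_mul_apply_of_covBy [LinearOrder ι] [Fintype ι] [NonUnitalNonAssocSemiring R]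
    (u : ι → R) (N : Matrix ι ι R) {i k : ι} (h : i ⋖ k) (j : ι) :
    (superdiagonal u * N) i j = u k * N k j := by
  rw [mul_apply, Fintype.sum_eq_single k, superdiagonal_apply_of_covBy u h]
  intro l hl
  rw [superdiagonal_apply_of_not_covBy u fun hil => hl (hil.unique_right h), zero_mul]

lemma prod_Ioc_eq_mul_prod_Ioc_of_covBy [LinearOrder ι] [LocallyFiniteOrder ι] [CommMonoid R]
    (f : ι → R) {i k j : ι} (hik : i ⋖ k) (hkj : k ≤ j) :
    ∏ l ∈ Ioc i j, f l = f k * ∏ l ∈ Ioc k j, f l := by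
  have hIoc : Ioc i j = Icc k j := by
    ext l
    rw [mem_Ioc, mem_Icc, hik.lt_iff_le_right]
  rw [hIoc, mul_prod_Ioc_eq_prod_Icc hkj]

lemma superdiagonal_mul_pathWeight_apply [LinearOrder ι] [Fintype ι] [LocallyFiniteOrder ι]
    [CommSemiring R] (c : ι → R) (i j : ι) :
    (superdiagonal c * pathWeight c) i j = if i < j then ∏ k ∈ Ioc i j, c k else 0 := by
  split_ifs with hij
  · obtain ⟨k, hik, hkj⟩ := exists_covBy_le_of_lt hij
    rw [superdiagonal_mul_apply_of_covBy c _ hik, prod_Ioc_eq_mul_prod_Ioc_of_covBy c hik hkj,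
      pathWeight, of_apply, if_pos hkj]
  · rw [mul_apply]
    refine sum_eq_zero fun k _ => ?_
    by_cases hik : i ⋖ k
    · have hkj : ¬k ≤ j := fun hkj => hij (hik.lt.trans_le hkj)
      rw [pathWeight, of_apply, if_neg hkj, mul_zero]
    · rw [superdiagonal_apply_of_not_covBy c hik, zero_mul]

theorem one_sub_superdiagonal_mul_pathWeight [LinearOrder ι] [Fintype ι] [LocallyFiniteOrder ι]
    [CommRing R] (c : ι → R) : (1 - superdiagonal c) * pathWeight c = 1 := by
  ext i j
  rw [Matrix.sub_mul, Matrix.one_mul, Matrix.sub_apply, superdiagonal_mul_pathWeight_apply,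
    pathWeight, of_apply]
  rcases lt_trichotomy i j with hij | rfl | hji
  · rw [if_pos hij.le, if_pos hij, sub_self, one_apply_ne hij.ne]
  · rw [if_pos le_rfl, if_neg (lt_irrefl i), Ioc_self, prod_empty, sub_zero, one_apply_eq]
  · rw [if_neg hji.not_ge, if_neg hji.not_gt, sub_zero, one_apply_ne hji.ne']

end Superdiagonal

section Inverse

variable {ι K : Type*} [Fintype ι]

lemma diagonal_sub_superdiagonal_eq_mul [Preorder ι] [DecidableEq ι] [DivisionRing K]
    (u : ι → K) {d : ι → K} (hd : ∀ i, d i ≠ 0) :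
    diagonal d - superdiagonal u = (1 - superdiagonal (u / d)) * diagonal d := by
  have hud : u / d * d = u := funext fun i => div_mul_cancel₀ (u i) (hd i)
  rw [Matrix.sub_mul, Matrix.one_mul, superdiagonal_mul_diagonal, hud]

variable [LinearOrder ι] [LocallyFiniteOrder ι] [Field K]

lemma diagonal_sub_superdiagonal_mul_eq_one (u : ι → K) {d : ι → K} (hd : ∀ i, d i ≠ 0) :
    (diagonal d - superdiagonal u) * (diagonal d⁻¹ * pathWeight (u / d)) = 1 := by
  have hdiag : diagonal d * diagonal d⁻¹ = 1 := by
    rw [diagonal_mul_diagonal, ← diagonal_one]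
    exact congrArg diagonal (funext fun i => mul_inv_cancel₀ (hd i))
  calc (diagonal d - superdiagonal u) * (diagonal d⁻¹ * pathWeight (u / d))
      = (1 - superdiagonal (u / d)) * ((diagonal d * diagonal d⁻¹) * pathWeight (u / d)) := by
        rw [diagonal_sub_superdiagonal_eq_mul u hd]
        simp only [Matrix.mul_assoc]
    _ = 1 := by rw [hdiag, Matrix.one_mul, one_sub_superdiagonal_mul_pathWeight]

theorem stmt_6_general (u : ι → K) {d : ι → K} (hd : ∀ i, d i ≠ 0) :
    IsUnit (diagonal d - superdiagonal u) ∧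
      ∀ i j, (diagonal d - superdiagonal u)⁻¹ i j =
        if i ≤ j then (1 / d i) * ∏ k ∈ Ioc i j, u k / d k else 0 := by
  have hinv := diagonal_sub_superdiagonal_mul_eq_one u hd
  refine ⟨IsUnit.of_mul_eq_one _ hinv, fun i j => ?_⟩
  simp only [inv_eq_right_inv hinv, diagonal_mul, pathWeight, of_apply, mul_ite, mul_zero, one_div,
    Pi.inv_apply, Pi.div_apply]

end Inverse

lemma diagonal_sub_superdiagonal_fin_apply {R : Type*} [AddGroup R] {n : ℕ} (d u : Fin n → R)
    (i j : Fin n) :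
    (diagonal d - superdiagonal u) i j =
      if i = j then d i else if (j : ℕ) = (i : ℕ) + 1 then -(u j) else 0 := by
  have hcov : i ⋖ j ↔ (j : ℕ) = (i : ℕ) + 1 := by
    rw [Fin.covBy_iff, Nat.covBy_iff_add_one_eq, eq_comm]
  rw [Matrix.sub_apply, diagonal_apply]
  split_ifs with hij hsucc
  · rw [superdiagonal_apply_of_not_covBy u fun h => h.ne hij, sub_zero]
  · rw [superdiagonal_apply_of_covBy u (hcov.2 hsucc), zero_sub]
  · rw [superdiagonal_apply_of_not_covBy u (mt hcov.1 hsucc), sub_zero]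

/-- For strictly positive `μ₀,…,μ_{n-1}` and `s < μᵢ` for all `i`,
the upper bidiagonal matrix `M` with `M_{ii} = μᵢ - s` and `M_{i,i+1} = -μ_{i+1}`
is invertible, with `(M⁻¹)_{ij} = (1/(μᵢ - s))·∏_{k=i+1}^{j} μ_k/(μ_k - s)` for
`i ≤ j` and `0` for `i > j`. -/
theorem stmt_6 (n : ℕ) (hn : 1 ≤ n) (μ : Fin n → ℝ) (hμ : ∀ i, 0 < μ i)
    (s : ℝ) (hs : ∀ i, s < μ i)
    (M : Matrix (Fin n) (Fin n) ℝ)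
    (hM : ∀ i j : Fin n, M i j =
      if i = j then μ i - s
      else if (j : ℕ) = (i : ℕ) + 1 then -(μ j) else 0) :
    IsUnit M ∧
      ∀ i j : Fin n, M⁻¹ i j =
        if i ≤ j then (1 / (μ i - s)) * ∏ k ∈ Finset.Ioc i j, μ k / (μ k - s)
        else 0 := by
  obtain rfl : M = diagonal (fun i => μ i - s) - superdiagonal μ :=
    Matrix.ext fun i j =>
      (hM i j).trans (diagonal_sub_superdiagonal_fin_apply (fun i => μ i - s) μ i j).symm
  exact stmt_6_general μ fun i => sub_ne_zero.2 (hs i).ne'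
end

section
/- Let n ≥ 1 and let μ₀, …, μ_{n−1} be strictly positive reals. Define the n-node line network matrices (rows and columns indexed 0, …, n−1): D = (∑_{i=0}^{n−1} μᵢ)·I, and R with R_{jj} = (∑_{i=0}^{n−1} μᵢ) − μ_j for all j, R_{j,j+1} = μ_{j+1} for 0 ≤ j ≤ n−2, and all other entries zero. Then D − R is invertible and ((D − R)^{-1})_{ij} = 1/μᵢ for i ≤ j and ((D − R)^{-1})_{ij} = 0 for i > j. Consequently, for every integer m ≥ 1, the stationary m-th moment age vector m!·1_n·((D − R)^{-1})^m of the line network equals m!·1_n·N^m, where N is the upper-triangular matrix with N_{ij} = 1/μᵢ for i ≤ j and 0 otherwise. -/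
open Matrix Finset Nat

/-! Write `C` for the matrix of the covering relation and `Z` for the matrix of `≤`. Column `l` of
`D - R` is `μ l` times column `l` of `1 - C`, so `D - R = (1 - C) * diagonal μ`. In a chain, any
`i < j` has exactly one cover below `j`, hence `C * Z` is the matrix of `<`, and `(1 - C) * Z = 1`.
The inverse of `D - R` is therefore `diagonal μ⁻¹ * Z`. -/

section ChainMatrices

variable (ι α : Type*)

/-- The matrix of the order relation `≤`, i.e. the zeta function of the incidence algebra of `ι`,
with entry `1` at `(i, j)` when `i ≤ j`. -/
def zetaMatrix [LE ι] [DecidableLE ι] [Zero α] [One α] : Matrix ι ι α :=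
  of fun i j => if i ≤ j then 1 else 0

open scoped Classical in
/-- The matrix of the covering relation `⋖`. For `ι = Fin n` it is the nilpotent shift whose only
nonzero entries are the ones just above the diagonal. -/
noncomputable def covByMatrix [LT ι] [Zero α] [One α] : Matrix ι ι α :=
  of fun i j => if i ⋖ j then 1 else 0

variable {ι α} [LinearOrder ι]

theorem existsUnique_covBy_le_of_lt [IsStronglyAtomic ι] {i j : ι} (hij : i < j) :
    ∃! l, i ⋖ l ∧ l ≤ j := by
  obtain ⟨l, hil, hlj⟩ := exists_covBy_le_of_lt hij
  exact ⟨l, ⟨hil, hlj⟩, fun k hk => hk.1.unique_right hil⟩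

variable [Fintype ι]

theorem covByMatrix_mul_zetaMatrix_apply [NonAssocSemiring α] (i j : ι) :
    (covByMatrix ι α * zetaMatrix ι α) i j = if i < j then 1 else 0 := by
  classical
  have hentry : (covByMatrix ι α * zetaMatrix ι α) i j =
      ∑ l, if i ⋖ l ∧ l ≤ j then 1 else 0 := by
    simp only [mul_apply, covByMatrix, zetaMatrix, of_apply, ite_and, ite_mul, one_mul, zero_mul]
  rw [hentry]
  split_ifs with hij
  · obtain ⟨k, hk, hunique⟩ := existsUnique_covBy_le_of_lt hij
    rw [Fintype.sum_eq_single k fun l hl => if_neg fun h => hl (hunique l h), if_pos hk]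
  · exact sum_eq_zero fun l _ => if_neg fun h => hij (h.1.lt.trans_le h.2)

theorem one_sub_covByMatrix_mul_zetaMatrix [NonAssocRing α] :
    (1 - covByMatrix ι α) * zetaMatrix ι α = 1 := by
  ext i j
  rw [Matrix.sub_mul, Matrix.one_mul, Matrix.sub_apply, covByMatrix_mul_zetaMatrix_apply,
    zetaMatrix, of_apply, Matrix.one_apply]
  rcases lt_trichotomy i j with h | rfl | h
  · rw [if_pos h.le, if_pos h, if_neg h.ne, sub_self]
  · rw [if_pos le_rfl, if_neg (lt_irrefl i), if_pos rfl, sub_zero]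
  · rw [if_neg h.not_ge, if_neg h.not_gt, if_neg h.ne', sub_zero]

theorem one_sub_covByMatrix_mul_diagonal_mul_diagonal_inv_mul_zetaMatrix [DivisionRing α]
    {w : ι → α} (hw : ∀ i, w i ≠ 0) :
    (1 - covByMatrix ι α) * diagonal w * (diagonal w⁻¹ * zetaMatrix ι α) = 1 := by
  have hdiag : diagonal w * diagonal w⁻¹ = 1 := by
    rw [diagonal_mul_diagonal, ← diagonal_one]
    exact congrArg diagonal (funext fun i => mul_inv_cancel₀ (hw i))
  rw [Matrix.mul_assoc, ← Matrix.mul_assoc (diagonal w), hdiag, Matrix.one_mul,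
    one_sub_covByMatrix_mul_zetaMatrix]

open scoped Classical in
theorem smul_one_sub_eq_one_sub_covByMatrix_mul_diagonal [NonAssocRing α] {w : ι → α} {c : α}
    {R : Matrix ι ι α}
    (hR : ∀ j l, R j l = if j = l then c - w j else if j ⋖ l then w l else 0) :
    c • (1 : Matrix ι ι α) - R = (1 - covByMatrix ι α) * diagonal w := by
  ext j l
  rw [Matrix.sub_apply, Matrix.smul_apply, smul_eq_mul, hR, mul_diagonal, Matrix.sub_apply,
    covByMatrix, of_apply, Matrix.one_apply]
  rcases eq_or_ne j l with rfl | hne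
  · simp
  · by_cases hjl : j ⋖ l <;> simp [hne, hjl]

end ChainMatrices

open scoped Classical in
theorem stmt_7_general {ι K : Type*} [LinearOrder ι] [Fintype ι] [Field K] (μ : ι → K)
    (hμ : ∀ i, μ i ≠ 0) (c : K) (D R Nmat : Matrix ι ι K)
    (hD : D = c • (1 : Matrix ι ι K))
    (hR : ∀ j l, R j l = if j = l then c - μ j else if j ⋖ l then μ l else 0)
    (hN : ∀ i j, Nmat i j = if i ≤ j then 1 / μ i else 0) :
    IsUnit (D - R) ∧
      (∀ i j, (D - R)⁻¹ i j = if i ≤ j then 1 / μ i else 0) ∧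
      ∀ m : ℕ,
        (m ! : K) • ((fun _ => (1 : K)) ᵥ* ((D - R)⁻¹ ^ m)) =
          (m ! : K) • ((fun _ => (1 : K)) ᵥ* (Nmat ^ m)) := by
  have hfactor : D - R = (1 - covByMatrix ι K) * diagonal μ := by
    rw [hD, smul_one_sub_eq_one_sub_covByMatrix_mul_diagonal hR]
  have hN_factor : Nmat = diagonal μ⁻¹ * zetaMatrix ι K := by
    ext i j
    simp [hN, zetaMatrix]
  have hmul : (D - R) * Nmat = 1 := by
    rw [hfactor, hN_factor, one_sub_covByMatrix_mul_diagonal_mul_diagonal_inv_mul_zetaMatrix hμ]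
  have hinv : (D - R)⁻¹ = Nmat := inv_eq_right_inv hmul
  exact ⟨.of_mul_eq_one _ hmul, fun i j => by rw [hinv, hN], fun m => by rw [hinv]⟩

/-- For the `n`-node line network with rates `μ₀,…,μ_{n-1}`,
`D = (∑ μᵢ)·I` and `R` with `R_{jj} = (∑ μᵢ) - μ_j`, `R_{j,j+1} = μ_{j+1}`,
zeros elsewhere, the matrix `D - R` is invertible with
`((D - R)⁻¹)_{ij} = 1/μᵢ` for `i ≤ j` and `0` otherwise; consequently the
stationary `m`-th moment age vector `m!·1ₙ·((D - R)⁻¹)^m` equals `m!·1ₙ·N^m`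
for the upper-triangular matrix `N` with `N_{ij} = 1/μᵢ` for `i ≤ j`. -/
theorem stmt_7 (n : ℕ) (hn : 1 ≤ n) (μ : Fin n → ℝ) (hμ : ∀ i, 0 < μ i)
    (D R Nmat : Matrix (Fin n) (Fin n) ℝ)
    (hD : D = (∑ i, μ i) • (1 : Matrix (Fin n) (Fin n) ℝ))
    (hR : ∀ j l : Fin n, R j l =
      if j = l then (∑ i, μ i) - μ j
      else if (l : ℕ) = (j : ℕ) + 1 then μ l else 0)
    (hN : ∀ i j : Fin n, Nmat i j = if i ≤ j then 1 / μ i else 0) :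
    IsUnit (D - R) ∧
      (∀ i j : Fin n, (D - R)⁻¹ i j = if i ≤ j then 1 / μ i else 0) ∧
      ∀ m : ℕ, 1 ≤ m →
        (m ! : ℝ) • ((fun _ => (1 : ℝ)) ᵥ* ((D - R)⁻¹ ^ m)) =
          (m ! : ℝ) • ((fun _ => (1 : ℝ)) ᵥ* (Nmat ^ m)) := by
  classical
  have hcovBy (j l : Fin n) : (l : ℕ) = (j : ℕ) + 1 ↔ j ⋖ l := by
    rw [Fin.covBy_iff, Nat.covBy_iff_add_one_eq, eq_comm]
  simp only [hcovBy] at hR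
  obtain ⟨hunit, hinv, hmoment⟩ :=
    stmt_7_general μ (fun i => (hμ i).ne') _ D R Nmat hD hR hN
  exact ⟨hunit, hinv, fun m _ => hmoment m⟩
end

section
/- Let n ≥ 1, let μ₀, …, μ_{n−1} be strictly positive reals, and let s be a real number with s < μᵢ for all i. Define the n-node line network matrices (rows and columns indexed 0, …, n−1): D = (∑_{i=0}^{n−1} μᵢ)·I, R with R_{jj} = (∑_{i=0}^{n−1} μᵢ) − μ_j for all j, R_{j,j+1} = μ_{j+1} for 0 ≤ j ≤ n−2, all other entries zero, and R̂ the n×n matrix whose only nonzero entry is R̂_{00} = μ₀. Then the row vector v ∈ ℝ^n with entries v_j = ∏_{k=0}^{j} μ_k/(μ_k − s) satisfies v·(D − R − s·I) = 1_n·R̂; since D − R − s·I is invertible, v = 1_n·R̂·(D − R − s·I)^{-1} is the unique such vector. -/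
open Matrix Finset

/-! Writing `B = D - R - s • 1`, the total rate `∑ i, μ i` cancels, and `B` is upper bidiagonal with
diagonal entries `μ j - s` and entries `-μ j` above them. The `j`-th column of `w ᵥ* B = 1 ᵥ* Rhat`
is therefore the two-term recursion `w j * (μ j - s) = w (j - 1) * μ j`, started at
`w 0 * (μ 0 - s) = μ 0`, which telescopes to the product formula; and `det B = ∏ j, (μ j - s)`. -/

section Products

variable {ι M : Type*} [LinearOrder ι] [LocallyFiniteOrderBot ι] [CommMonoid M]

theorem prod_Iic_of_isMin {i : ι} (hi : IsMin i) (f : ι → M) : ∏ k ∈ Iic i, f k = f i := by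
  rw [← prod_Iio_mul_eq_prod_Iic, hi.finsetIio_eq, prod_empty, one_mul]

theorem prod_Iic_of_covBy {i j : ι} (hij : i ⋖ j) (f : ι → M) :
    ∏ k ∈ Iic j, f k = (∏ k ∈ Iic i, f k) * f j := by
  have hIio : Iio j = Iic i := coe_injective (by simpa using hij.Iio_eq)
  rw [← prod_Iio_mul_eq_prod_Iic, hIio]

end Products

theorem eq_vecMul_inv_iff {ι R : Type*} [Fintype ι] [DecidableEq ι] [CommRing R]
    {A : Matrix ι ι R} (hA : IsUnit A) {v b : ι → R} : v = b ᵥ* A⁻¹ ↔ v ᵥ* A = b := by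
  have hdet : IsUnit A.det := (isUnit_iff_isUnit_det A).mp hA
  constructor
  · rintro rfl
    rw [vecMul_vecMul, nonsing_inv_mul A hdet, vecMul_one]
  · rintro rfl
    rw [vecMul_vecMul, mul_nonsing_inv A hdet, vecMul_one]

/-- The upper bidiagonal matrix with diagonal `d` and superdiagonal `u`, the shape shared by `R` and
`D - R - s • 1` in a line network. Superdiagonal entries are indexed by their column, as the rates
`μ` are in `R`, so the first entry of `u` does not occur. -/
def upperBidiagonal {n : ℕ} {K : Type*} [Zero K] (d u : Fin n → K) : Matrix (Fin n) (Fin n) K :=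
  of fun i j => if i = j then d i else if (j : ℕ) = (i : ℕ) + 1 then u j else 0

namespace upperBidiagonal

variable {n : ℕ} {K : Type*}

section Zero

variable [Zero K] (d u : Fin n → K)

theorem apply_self (i : Fin n) : upperBidiagonal d u i i = d i := if_pos rfl

theorem apply_of_val_eq_succ {i j : Fin n} (h : (j : ℕ) = i + 1) :
    upperBidiagonal d u i j = u j := by
  have hne : i ≠ j := by grind
  simp [upperBidiagonal, h, hne]

theorem apply_eq_zero {i j : Fin n} (hne : i ≠ j) (hsucc : (j : ℕ) ≠ i + 1) :
    upperBidiagonal d u i j = 0 := by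
  simp [upperBidiagonal, hne, hsucc]

theorem isUpperTriangular : (upperBidiagonal d u).IsUpperTriangular := fun i j (hji : j < i) =>
  apply_eq_zero d u hji.ne' (by grind)

end Zero

section VecMul

variable [NonUnitalNonAssocSemiring K] (d u w : Fin n → K)

theorem vecMul_of_val_eq_zero {j : Fin n} (hj : (j : ℕ) = 0) :
    (w ᵥ* upperBidiagonal d u) j = w j * d j := by
  rw [vecMul_apply_eq_sum, Fintype.sum_eq_single j, apply_self]
  intro i hi
  rw [apply_eq_zero d u hi (by grind), mul_zero]

theorem vecMul_of_val_eq_succ {i j : Fin n} (h : (j : ℕ) = i + 1) :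
    (w ᵥ* upperBidiagonal d u) j = w i * u j + w j * d j := by
  have hne : i ≠ j := by grind
  rw [vecMul_apply_eq_sum, Fintype.sum_eq_add i j hne, apply_of_val_eq_succ d u h, apply_self]
  rintro k ⟨hki, hkj⟩
  rw [apply_eq_zero d u hkj (by grind), mul_zero]

end VecMul

theorem det_eq_prod [CommRing K] (d u : Fin n → K) : (upperBidiagonal d u).det = ∏ i, d i := by
  simp only [det_of_isUpperTriangular (isUpperTriangular d u), apply_self]

theorem isUnit_iff [CommRing K] {d u : Fin n → K} :
    IsUnit (upperBidiagonal d u) ↔ ∀ i, IsUnit (d i) := by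
  rw [isUnit_iff_isUnit_det, det_eq_prod, IsUnit.prod_univ_iff]

theorem prod_div_vecMul [Field K] {d : Fin n → K} (hd : ∀ i, d i ≠ 0) (a : Fin n → K) :
    (fun j => ∏ k ∈ Iic j, a k / d k) ᵥ* upperBidiagonal d (-a) =
      fun j : Fin n => if (j : ℕ) = 0 then a j else 0 := by
  funext j
  rcases Nat.eq_zero_or_eq_succ_pred (j : ℕ) with hj | hj
  · have hmin : IsMin j := fun i _ => by grind
    rw [vecMul_of_val_eq_zero _ _ _ hj, prod_Iic_of_isMin hmin, div_mul_cancel₀ _ (hd j), if_pos hj]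
  · obtain ⟨i, hij⟩ : ∃ i : Fin n, (j : ℕ) = i + 1 := ⟨⟨(j : ℕ) - 1, by grind⟩, hj⟩
    have hcov : i ⋖ j := Fin.covBy_iff.mpr (Nat.covBy_iff_add_one_eq.mpr hij.symm)
    rw [vecMul_of_val_eq_succ _ _ _ hij, prod_Iic_of_covBy hcov, mul_assoc,
      div_mul_cancel₀ _ (hd j), Pi.neg_apply, mul_neg, neg_add_cancel, if_neg (by grind)]

end upperBidiagonal

theorem smul_one_sub_upperBidiagonal_sub_smul_one {n : ℕ} {K : Type*} [Ring K] (c s : K)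
    (μ : Fin n → K) :
    c • (1 : Matrix (Fin n) (Fin n) K) - upperBidiagonal (fun j => c - μ j) μ - s • 1 =
      upperBidiagonal (fun j => μ j - s) (-μ) := by
  ext i j
  simp only [upperBidiagonal, Matrix.sub_apply, Matrix.smul_apply, one_apply, of_apply,
    smul_eq_mul, mul_ite, mul_one, mul_zero, Pi.neg_apply]
  split_ifs <;> abel

theorem stmt_8_general {K : Type*} [Field K] (n : ℕ) (μ : Fin n → K)
    (s : K) (hs : ∀ i, μ i ≠ s)
    (D R Rhat : Matrix (Fin n) (Fin n) K)
    (hD : D = (∑ i, μ i) • (1 : Matrix (Fin n) (Fin n) K))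
    (hR : ∀ j l : Fin n, R j l =
      if j = l then (∑ i, μ i) - μ j
      else if (l : ℕ) = (j : ℕ) + 1 then μ l else 0)
    (hRhat : ∀ i j : Fin n, Rhat i j =
      if (i : ℕ) = 0 ∧ (j : ℕ) = 0 then μ i else 0)
    (v : Fin n → K)
    (hv : ∀ j : Fin n, v j = ∏ k ∈ Finset.Iic j, μ k / (μ k - s)) :
    v ᵥ* (D - R - s • (1 : Matrix (Fin n) (Fin n) K)) = (fun _ => (1 : K)) ᵥ* Rhat ∧
      IsUnit (D - R - s • (1 : Matrix (Fin n) (Fin n) K)) ∧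
      v = ((fun _ => (1 : K)) ᵥ* Rhat) ᵥ* (D - R - s • (1 : Matrix (Fin n) (Fin n) K))⁻¹ ∧
      ∀ w : Fin n → K,
        w ᵥ* (D - R - s • (1 : Matrix (Fin n) (Fin n) K)) = (fun _ => (1 : K)) ᵥ* Rhat →
        w = v := by
  have hd : ∀ i, μ i - s ≠ 0 := fun i => sub_ne_zero.mpr (hs i)
  have hR_eq : R = upperBidiagonal (fun j => (∑ i, μ i) - μ j) μ := Matrix.ext hR
  have hRhat_eq : Rhat = diagonal fun j : Fin n => if (j : ℕ) = 0 then μ j else 0 := by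
    ext i j
    grind [diagonal_apply]
  have hb : (fun _ => (1 : K)) ᵥ* Rhat = fun j : Fin n => if (j : ℕ) = 0 then μ j else 0 := by
    funext j
    rw [hRhat_eq, vecMul_diagonal, one_mul]
  rw [hb, hD, hR_eq, smul_one_sub_upperBidiagonal_sub_smul_one, funext hv]
  have hunit : IsUnit (upperBidiagonal (fun j => μ j - s) (-μ)) :=
    upperBidiagonal.isUnit_iff.mpr fun i => (hd i).isUnit
  have hsol := upperBidiagonal.prod_div_vecMul hd μ
  exact ⟨hsol, hunit, (eq_vecMul_inv_iff hunit).mpr hsol,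
    fun w hw => vecMul_injective_of_isUnit hunit (hw.trans hsol.symm)⟩

/-- For the `n`-node line network, the row vector
`v_j = ∏_{k=0}^{j} μ_k/(μ_k - s)` satisfies `v·(D - R - s·I) = 1ₙ·R̂`, and since
`D - R - s·I` is invertible, `v = 1ₙ·R̂·(D - R - s·I)⁻¹` is the unique such
vector. -/
theorem stmt_8 (n : ℕ) (hn : 1 ≤ n) (μ : Fin n → ℝ) (hμ : ∀ i, 0 < μ i)
    (s : ℝ) (hs : ∀ i, s < μ i)
    (D R Rhat : Matrix (Fin n) (Fin n) ℝ)
    (hD : D = (∑ i, μ i) • (1 : Matrix (Fin n) (Fin n) ℝ))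
    (hR : ∀ j l : Fin n, R j l =
      if j = l then (∑ i, μ i) - μ j
      else if (l : ℕ) = (j : ℕ) + 1 then μ l else 0)
    (hRhat : ∀ i j : Fin n, Rhat i j =
      if (i : ℕ) = 0 ∧ (j : ℕ) = 0 then μ i else 0)
    (v : Fin n → ℝ)
    (hv : ∀ j : Fin n, v j = ∏ k ∈ Finset.Iic j, μ k / (μ k - s)) :
    v ᵥ* (D - R - s • (1 : Matrix (Fin n) (Fin n) ℝ)) = (fun _ => (1 : ℝ)) ᵥ* Rhat ∧
      IsUnit (D - R - s • (1 : Matrix (Fin n) (Fin n) ℝ)) ∧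
      v = ((fun _ => (1 : ℝ)) ᵥ* Rhat) ᵥ* (D - R - s • (1 : Matrix (Fin n) (Fin n) ℝ))⁻¹ ∧
      ∀ w : Fin n → ℝ,
        w ᵥ* (D - R - s • (1 : Matrix (Fin n) (Fin n) ℝ)) = (fun _ => (1 : ℝ)) ᵥ* Rhat →
        w = v :=
  stmt_8_general n μ s (fun i => (hs i).ne') D R Rhat hD hR hRhat v hv
end

section
/- Let λ, μ, α > 0 and set β = μ + α and γ = λ + μ + α (so γ = λ + β). Let s be a real number with s ≠ λ, s ≠ β, and λμ − γs + s² ≠ 0. Define the row 2-vectors v₀ = (λβ/((λ−s)(β−s)γ))·[β, μ(λβ − γs + s²)/(λμ − γs + s²)] and v₁ = (λβ/((β−s)γ))·[1, λμ/(λμ − γs + s²)]. Then v₀ and v₁ satisfy the stationary MGF equations of the M/M/1/1 queue with abandonment: (λ − s)·v₀ = v₁·[[β, μ],[0, α]] and (β − s)·v₁ = v₀·[[0, 0],[0, λ]] + (β/γ)·[λ, 0]. -/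
open Matrix

/-! Eliminating `v₀` leaves `(λ - s)(β - s)·v₁ = v₁·[[0, λμ], [0, λα]] + (λ - s)·(β/γ)·[λ, 0]`,
which is solved one coordinate at a time: the first is free of the second, and the coefficient
of the second is `(λ - s)(β - s) - λα = λμ - γs + s²`. Hence the closed form is the only solution. -/

section LinearSystems

variable {K : Type*} [Field K]

theorem smul_eq_vecMul_and_smul_eq_vecMul_add_iff {m n : Type*} [Fintype m] [Fintype n]
    {a : K} (ha : a ≠ 0) (b : K) (B : Matrix m n K) (A : Matrix n m K) (c : m → K)
    (x : n → K) (y : m → K) :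
    a • x = y ᵥ* B ∧ b • y = x ᵥ* A + c ↔
      (a * b) • y = y ᵥ* (B * A) + a • c ∧ x = a⁻¹ • (y ᵥ* B) := by
  rw [← eq_inv_smul_iff₀ ha, and_comm]
  refine and_congr_left fun hx ↦ ?_
  have hxA : a • (x ᵥ* A) = y ᵥ* (B * A) := by
    rw [hx, smul_vecMul, smul_inv_smul₀ ha, vecMul_vecMul]
  rw [← hxA, ← smul_add, mul_smul, smul_right_inj ha]

theorem smul_eq_vecMul_add_iff_of_col_zero_eq_zero {t w : K} (ht : t ≠ 0)
    (htw : t - w ≠ 0) (u k : K) (y : Fin 2 → K) :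
    t • y = y ᵥ* !![0, u; 0, w] + ![k, 0] ↔ y = (k / t) • ![1, u / (t - w)] := by
  have coordinates : t • y = y ᵥ* !![0, u; 0, w] + ![k, 0] ↔
      t * y 0 = k ∧ t * y 1 = y 0 * u + y 1 * w := by
    simp [funext_iff, Fin.forall_fin_two, vecHead, vecTail]
  have solution : y = (k / t) • ![1, u / (t - w)] ↔
      y 0 = k / t ∧ y 1 = k / t * (u / (t - w)) := by
    simp [funext_iff, Fin.forall_fin_two]
  rw [coordinates, solution, mul_comm t (y 0), ← eq_div_iff ht]
  refine and_congr_right fun h₀ ↦ ?_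
  rw [← h₀, ← mul_div_assoc, eq_div_iff htw, mul_sub, sub_eq_iff_eq_add, mul_comm t]

end LinearSystems

/-- In the queue, `p` is the stationary probability `β / γ` of the idle state. -/
theorem stmt_14_general {K : Type*} [Field K] {lam mu al β γ s : K}
    (hβ : β = mu + al) (hγ : γ = lam + mu + al) (hs1 : s ≠ lam) (hs2 : s ≠ β)
    (hs3 : lam * mu - γ * s + s ^ 2 ≠ 0) (p : K) (v₀ v₁ : Fin 2 → K) :
    (lam - s) • v₀ = v₁ ᵥ* !![β, mu; 0, al] ∧
        (β - s) • v₁ = v₀ ᵥ* !![0, 0; 0, lam] + p • ![lam, 0] ↔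
      v₁ = (lam * p / (β - s)) • ![1, lam * mu / (lam * mu - γ * s + s ^ 2)] ∧
        v₀ = (lam * p / ((lam - s) * (β - s))) •
          ![β, mu * (lam * β - γ * s + s ^ 2) / (lam * mu - γ * s + s ^ 2)] := by
  have h_lam : lam - s ≠ 0 := sub_ne_zero.mpr hs1.symm
  have h_beta : β - s ≠ 0 := sub_ne_zero.mpr hs2.symm
  have pivot_eq : (lam - s) * (β - s) - lam * al = lam * mu - γ * s + s ^ 2 := by
    rw [hβ, hγ]; ring
  have cycle : !![β, mu; 0, al] * !![0, 0; 0, lam] = !![0, lam * mu; 0, lam * al] := by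
    simp [mul_comm]
  have input : (lam - s) • p • ![lam, 0] = ![(lam - s) * (lam * p), 0] := by
    simp [mul_comm p]
  rw [smul_eq_vecMul_and_smul_eq_vecMul_add_iff h_lam, cycle, input,
    smul_eq_vecMul_add_iff_of_col_zero_eq_zero (mul_ne_zero h_lam h_beta) (by rwa [pivot_eq]),
    pivot_eq, mul_div_mul_left _ _ h_lam]
  refine and_congr_right fun h₁ ↦ ?_
  have second_entry : mu + lam * mu / (lam * mu - γ * s + s ^ 2) * al =
      mu * (lam * β - γ * s + s ^ 2) / (lam * mu - γ * s + s ^ 2) := by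
    rw [eq_div_iff hs3, add_mul, mul_right_comm, div_mul_cancel₀ _ hs3, hβ]
    ring
  have output : ![1, lam * mu / (lam * mu - γ * s + s ^ 2)] ᵥ* !![β, mu; 0, al] =
      ![β, mu * (lam * β - γ * s + s ^ 2) / (lam * mu - γ * s + s ^ 2)] := by
    rw [← second_entry]
    simp [vecMul_cons]
  have scale : (lam - s)⁻¹ * (lam * p / (β - s)) = lam * p / ((lam - s) * (β - s)) := by
    rw [inv_mul_eq_div, div_div, mul_comm (β - s)]
  rw [h₁, smul_vecMul, output, smul_smul, scale]

/-- For the M/M/1/1 queue with abandonment (arrival rate `λ`,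
service rate `μ`, abandonment rate `α`, `β = μ + α`, `γ = λ + μ + α`), the row
vectors `v₀` and `v₁` given by the paper's closed-form expressions satisfy the
stationary MGF equations
`(λ - s)·v₀ = v₁·[[β, μ],[0, α]]` and
`(β - s)·v₁ = v₀·[[0,0],[0,λ]] + (β/γ)·[λ, 0]`. -/
theorem stmt_14 (lam mu al : ℝ) (hlam : 0 < lam) (hmu : 0 < mu) (hal : 0 < al)
    (β γ : ℝ) (hβ : β = mu + al) (hγ : γ = lam + mu + al)
    (s : ℝ) (hs1 : s ≠ lam) (hs2 : s ≠ β) (hs3 : lam * mu - γ * s + s ^ 2 ≠ 0)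
    (v₀ v₁ : Fin 2 → ℝ)
    (hv₀ : v₀ = (lam * β / ((lam - s) * (β - s) * γ)) •
      ![β, mu * (lam * β - γ * s + s ^ 2) / (lam * mu - γ * s + s ^ 2)])
    (hv₁ : v₁ = (lam * β / ((β - s) * γ)) •
      ![1, lam * mu / (lam * mu - γ * s + s ^ 2)]) :
    (lam - s) • v₀ = v₁ ᵥ* !![β, mu; 0, al] ∧
      (β - s) • v₁ = v₀ ᵥ* !![0, 0; 0, lam] + (β / γ) • ![lam, 0] := by
  refine (stmt_14_general hβ hγ hs1 hs2 hs3 (β / γ) v₀ v₁).mpr ⟨?_, ?_⟩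
  · rw [hv₁, ← mul_div_assoc, div_div, mul_comm γ (β - s)]
  · rw [hv₀, ← mul_div_assoc, div_div, mul_comm γ (_ * _)]
end

section
/- Let λ, μ, α > 0 and set β = μ + α and γ = λ + μ + α. The function g(s) = λβμ·(λγ − (λ+γ)s + s²) / (γ·(λ−s)·(β−s)·(λμ − γs + s²)), defined for real s in a neighborhood of 0, satisfies g(0) = 1 and is differentiable at s = 0 with g'(0) = 1/λ + 1/μ + λ/((μ+α)(λ+μ+α)) + α/(λμ). -/
/-!
Since `λγ - (λ+γ)s + s² = (λ-s)(γ-s)`, the factor `λ - s` cancels near `0`, leaving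
`g(s) = β/(β-s) · (γ-s)/γ · λμ/(λμ - γs + s²)`. Each of the three factors equals `1` at `0`, so
their derivatives there add up: `g'(0) = 1/β - 1/γ + γ/(λμ)`. Finally `γ - β = λ` gives
`1/β - 1/γ = λ/(βγ)`, and `γ = λ + μ + α` splits the last term into `1/λ + 1/μ + α/(λμ)`.
-/

section NormalizedFactors

variable {𝕜 : Type*} [NontriviallyNormedField 𝕜]

theorem hasDerivAt_mul_of_eq_one {𝔸 : Type*} [NormedRing 𝔸] [NormedAlgebra 𝕜 𝔸]
    {f g : 𝕜 → 𝔸} {f' g' : 𝔸} {x : 𝕜} (hf : HasDerivAt f f' x) (hg : HasDerivAt g g' x)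
    (hfx : f x = 1) (hgx : g x = 1) :
    HasDerivAt (fun s => f s * g s) (f' + g') x := by
  simpa only [hfx, hgx, mul_one, one_mul] using hf.fun_mul hg

theorem hasDerivAt_apply_div {𝕜' : Type*} [NontriviallyNormedField 𝕜'] [NormedAlgebra 𝕜 𝕜']
    {f : 𝕜 → 𝕜'} {f' : 𝕜'} {x : 𝕜} (hf : HasDerivAt f f' x) (hfx : f x ≠ 0) :
    HasDerivAt (fun s => f x / f s) (-(f' / f x)) x := by
  refine ((hasDerivAt_const x (f x)).fun_div hf hfx).congr_deriv ?_
  field_simp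
  ring

theorem hasDerivAt_const_sub_div_self_zero (c : 𝕜) :
    HasDerivAt (fun s => (c - s) / c) (-(1 / c)) 0 :=
  (((hasDerivAt_id' (0 : 𝕜)).const_sub c).div_const c).congr_deriv (neg_div c 1)

theorem hasDerivAt_div_const_sub_zero {c : 𝕜} (hc : c ≠ 0) :
    HasDerivAt (fun s => c / (c - s)) (1 / c) 0 := by
  have hden : HasDerivAt (fun s => c - s) (-1) 0 := (hasDerivAt_id' (0 : 𝕜)).const_sub c
  simpa [neg_div] using hasDerivAt_apply_div hden (by simpa using hc)

theorem hasDerivAt_div_quadratic_zero (b : 𝕜) {c : 𝕜} (hc : c ≠ 0) :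
    HasDerivAt (fun s => c / (c - b * s + s ^ 2)) (b / c) 0 := by
  have hden : HasDerivAt (fun s => c - b * s + s ^ 2) (-b) 0 := by
    simpa using (((hasDerivAt_id' (0 : 𝕜)).const_mul b).const_sub c).fun_add (hasDerivAt_pow 2 0)
  simpa [neg_div] using hasDerivAt_apply_div hden (by simpa using hc)

end NormalizedFactors

section AgeMGF

variable {K : Type*} [Field K]

/-- The stationary moment generating function of the age at the destination monitor, as a rational
function of `s`. The derived rates `β = μ + α` and `γ = λ + μ + α` of the queue are kept as
independent parameters, and `s` ranges over an arbitrary field. -/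
def ageMGF (lam mu β γ s : K) : K :=
  lam * β * mu * (lam * γ - (lam + γ) * s + s ^ 2) /
    (γ * (lam - s) * (β - s) * (lam * mu - γ * s + s ^ 2))

theorem ageMGF_eq_mul_of_ne {lam s : K} (mu β γ : K) (hs : s ≠ lam) :
    ageMGF lam mu β γ s =
      β / (β - s) * ((γ - s) / γ) * (lam * mu / (lam * mu - γ * s + s ^ 2)) := by
  have hlam_sub : lam - s ≠ 0 := sub_ne_zero.mpr hs.symm
  calc ageMGF lam mu β γ s
      = (lam - s) * (β * (γ - s) * (lam * mu)) /
          ((lam - s) * ((β - s) * γ * (lam * mu - γ * s + s ^ 2))) := by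
        unfold ageMGF
        congr 1 <;> ring
    _ = β * (γ - s) * (lam * mu) / ((β - s) * γ * (lam * mu - γ * s + s ^ 2)) :=
        mul_div_mul_left _ _ hlam_sub
    _ = β / (β - s) * ((γ - s) / γ) * (lam * mu / (lam * mu - γ * s + s ^ 2)) := by
        rw [div_mul_div_comm, div_mul_div_comm]

theorem ageMGF_zero {lam mu β γ : K}
    (hlam : lam ≠ 0) (hmu : mu ≠ 0) (hβ : β ≠ 0) (hγ : γ ≠ 0) :
    ageMGF lam mu β γ 0 = 1 := by
  rw [ageMGF_eq_mul_of_ne mu β γ hlam.symm]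
  simp [hlam, hmu, hβ, hγ]

theorem averageAge_eq {lam mu al : K} (hlam : lam ≠ 0) (hmu : mu ≠ 0)
    (hβ : mu + al ≠ 0) (hγ : lam + mu + al ≠ 0) :
    1 / (mu + al) - 1 / (lam + mu + al) + (lam + mu + al) / (lam * mu) =
      1 / lam + 1 / mu + lam / ((mu + al) * (lam + mu + al)) + al / (lam * mu) := by
  have hdiff : 1 / (mu + al) - 1 / (lam + mu + al) = lam / ((mu + al) * (lam + mu + al)) := by
    rw [div_sub_div _ _ hβ hγ]
    congr 1
    ring
  have hsplit : (lam + mu + al) / (lam * mu) = 1 / lam + 1 / mu + al / (lam * mu) := by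
    field_simp
    ring
  rw [hdiff, hsplit]
  ring

end AgeMGF

theorem hasDerivAt_ageMGF_zero {𝕜 : Type*} [NontriviallyNormedField 𝕜] {lam mu β γ : 𝕜}
    (hlam : lam ≠ 0) (hmu : mu ≠ 0) (hβ : β ≠ 0) (hγ : γ ≠ 0) :
    HasDerivAt (ageMGF lam mu β γ) (1 / β - 1 / γ + γ / (lam * mu)) 0 := by
  have hlinear : HasDerivAt (fun s => β / (β - s) * ((γ - s) / γ)) (1 / β - 1 / γ) 0 := by
    rw [sub_eq_add_neg]
    exact hasDerivAt_mul_of_eq_one (hasDerivAt_div_const_sub_zero hβ)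
      (hasDerivAt_const_sub_div_self_zero γ) (by simp [hβ]) (by simp [hγ])
  have hfactored := hasDerivAt_mul_of_eq_one hlinear
    (hasDerivAt_div_quadratic_zero γ (mul_ne_zero hlam hmu)) (by simp [hβ, hγ])
    (by simp [hlam, hmu])
  refine hfactored.congr_of_eventuallyEq ?_
  filter_upwards [eventually_ne_nhds hlam.symm] with s hs using ageMGF_eq_mul_of_ne mu β γ hs

theorem stmt_15_general {𝕜 : Type*} [NontriviallyNormedField 𝕜] (lam mu al : 𝕜)
    (hlam : lam ≠ 0) (hmu : mu ≠ 0) (β γ : 𝕜) (hβ : β = mu + al) (hγ : γ = lam + mu + al)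
    (hβ_ne : β ≠ 0) (hγ_ne : γ ≠ 0) (g : 𝕜 → 𝕜)
    (hg : g = fun s : 𝕜 =>
      lam * β * mu * (lam * γ - (lam + γ) * s + s ^ 2) /
        (γ * (lam - s) * (β - s) * (lam * mu - γ * s + s ^ 2))) :
    g 0 = 1 ∧
      HasDerivAt g
        (1 / lam + 1 / mu + lam / ((mu + al) * (lam + mu + al)) + al / (lam * mu)) 0 := by
  obtain rfl : g = ageMGF lam mu β γ := hg
  subst hβ hγ
  rw [← averageAge_eq hlam hmu hβ_ne hγ_ne]
  exact ⟨ageMGF_zero hlam hmu hβ_ne hγ_ne, hasDerivAt_ageMGF_zero hlam hmu hβ_ne hγ_ne⟩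

/-- The stationary MGF
`g(s) = λβμ(λγ - (λ+γ)s + s²)/(γ(λ-s)(β-s)(λμ - γs + s²))` of the age at the
destination monitor of the M/M/1/1 queue with abandonment satisfies `g(0) = 1`
and is differentiable at `0` with
`g'(0) = 1/λ + 1/μ + λ/((μ+α)(λ+μ+α)) + α/(λμ)`. -/
theorem stmt_15 (lam mu al : ℝ) (hlam : 0 < lam) (hmu : 0 < mu) (hal : 0 < al)
    (β γ : ℝ) (hβ : β = mu + al) (hγ : γ = lam + mu + al)
    (g : ℝ → ℝ)
    (hg : g = fun s : ℝ =>
      lam * β * mu * (lam * γ - (lam + γ) * s + s ^ 2) /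
        (γ * (lam - s) * (β - s) * (lam * mu - γ * s + s ^ 2))) :
    g 0 = 1 ∧
      HasDerivAt g
        (1 / lam + 1 / mu + lam / ((mu + al) * (lam + mu + al)) + al / (lam * mu)) 0 :=
  stmt_15_general lam mu al hlam.ne' hmu.ne' β γ hβ hγ (hβ ▸ (add_pos hmu hal).ne')
    (hγ ▸ (add_pos (add_pos hlam hmu) hal).ne') g hg
end

section
/- For all μ > 0 and α > 0 there exists λ₀ > 0 such that for every λ > λ₀, 1/λ + 1/μ + λ/((μ+α)(λ+μ+α)) + α/(λμ) < 1/λ + 1/μ + λ/(μ(λ+μ)). -/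
/-!
Since `λ/(x(λ+x)) = 1/x - 1/(λ+x)`, abandonment at rate `α` saves an amount of age that tends to
`1/μ - 1/(μ+α) > 0` as `λ → ∞`, while its cost `α/(λμ)` tends to `0`. Over a common denominator
the net saving has the sign of the cubic `(λ+μ)(λ² - (μ+α)²) - μ(μ+α)λ`, whose leading coefficient
is positive.
-/

/-- The stationary average age of information at the monitor of an M/M/1/1 queue with arrival rate
`lam`, service rate `mu` and abandonment rate `al`, given by its closed form so that it makes sense
over any field. -/
def averageAge {K : Type*} [Field K] (lam mu al : K) : K :=
  1 / lam + 1 / mu + lam / ((mu + al) * (lam + mu + al)) + al / (lam * mu)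

theorem averageAge_zero {K : Type*} [Field K] (lam mu : K) :
    averageAge lam mu 0 = 1 / lam + 1 / mu + lam / (mu * (lam + mu)) := by
  simp only [averageAge, add_zero, zero_div]

theorem averageAge_zero_sub_averageAge {K : Type*} [Field K] {lam mu al : K}
    (hlam : lam ≠ 0) (hmu : mu ≠ 0) (hmual : mu + al ≠ 0)
    (hlammu : lam + mu ≠ 0) (hsum : lam + mu + al ≠ 0) :
    averageAge lam mu 0 - averageAge lam mu al =
      al * ((lam + mu) * (lam ^ 2 - (mu + al) ^ 2) - mu * (mu + al) * lam) /
        (lam * mu * (mu + al) * (lam + mu) * (lam + mu + al)) := by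
  rw [averageAge_zero, averageAge]
  field_simp
  ring

section Order

variable {K : Type*} [Field K] [LinearOrder K] [IsStrictOrderedRing K] {lam mu al : K}

theorem averageAge_lt_averageAge_zero_iff (hlam : 0 < lam) (hmu : 0 < mu) (hal : 0 < al) :
    averageAge lam mu al < averageAge lam mu 0 ↔
      mu * (mu + al) * lam < (lam + mu) * (lam ^ 2 - (mu + al) ^ 2) := by
  have hden : 0 < lam * mu * (mu + al) * (lam + mu) * (lam + mu + al) := by positivity
  rw [← sub_pos, averageAge_zero_sub_averageAge (by positivity) (by positivity) (by positivity)
    (by positivity) (by positivity), div_pos_iff_of_pos_right hden, mul_pos_iff_of_pos_left hal,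
    sub_pos]

theorem averageAge_lt_averageAge_zero (hmu : 0 < mu) (hal : 0 < al)
    (hlam : 2 * (mu + al) ≤ lam) : averageAge lam mu al < averageAge lam mu 0 := by
  have hlam_pos : 0 < lam := by linarith
  have hsq : (2 * (mu + al)) ^ 2 ≤ lam ^ 2 := by gcongr
  have hfactor : mu * (mu + al) < lam ^ 2 - (mu + al) ^ 2 := calc
    mu * (mu + al) < (mu + al) * (mu + al) := by gcongr; exact lt_add_of_pos_right mu hal
    _ ≤ lam ^ 2 - (mu + al) ^ 2 := by linarith [sq_nonneg (mu + al)]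
  rw [averageAge_lt_averageAge_zero_iff hlam_pos hmu hal]
  calc
    mu * (mu + al) * lam = lam * (mu * (mu + al)) := mul_comm _ _
    _ < (lam + mu) * (lam ^ 2 - (mu + al) ^ 2) := by
      gcongr
      exact lt_add_of_pos_right lam hmu

end Order

/-- For all `μ, α > 0` there exists `λ₀ > 0` such that for every
`λ > λ₀` the average age with abandonment rate `α` is strictly smaller than the
average age without abandonment:
`1/λ + 1/μ + λ/((μ+α)(λ+μ+α)) + α/(λμ) < 1/λ + 1/μ + λ/(μ(λ+μ))`. -/
theorem stmt_16 (mu al : ℝ) (hmu : 0 < mu) (hal : 0 < al) :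
    ∃ lam₀ : ℝ, 0 < lam₀ ∧ ∀ lam : ℝ, lam₀ < lam →
      1 / lam + 1 / mu + lam / ((mu + al) * (lam + mu + al)) + al / (lam * mu) <
        1 / lam + 1 / mu + lam / (mu * (lam + mu)) := by
  refine ⟨2 * (mu + al), by positivity, fun lam hlam => ?_⟩
  rw [← averageAge_zero]
  exact averageAge_lt_averageAge_zero hmu hal hlam.le
end

section
/- Let b > 0 and define f : ℝ → ℝ by f(z) = (2/b)·(1 − z/b) for 0 ≤ z ≤ b and f(z) = 0 otherwise. Then for every x ∈ ℝ, the convolution ∫_ℝ f(u)·f(x − u) du equals (4x/b²)·(1 − x/b + x²/(6b²)) if 0 ≤ x ≤ b, equals (2/(3b))·(2 − x/b)³ if b ≤ x ≤ 2b, and equals 0 if x < 0 or x > 2b (the two formulas agree at x = b, both giving 2/(3b)). -/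
open MeasureTheory

/-!
The density is `2 / b ^ 2` times the ramp `z ↦ b - z` truncated to `[0, b]`. Convolving two
truncated functions amounts to integrating over the overlap of one interval with the reflection of
the other, and for `[0, a]` and `[0, b]` this overlap is `[max 0 (x - b), min a x]`. On it the
integrand is `(a - u) * (u - (x - b))`. For `x` beyond both `a` and `b` the overlap is the interval
between the two roots of this quadratic, which is why only a cube of its length survives.
-/

open Set Function
open scoped Convolution Pointwise

theorem convolution_indicator_indicator {𝕜 G E E' F : Type*} [NontriviallyNormedField 𝕜]
    [NormedAddCommGroup E] [NormedAddCommGroup E'] [NormedAddCommGroup F]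
    [NormedSpace 𝕜 E] [NormedSpace 𝕜 E'] [NormedSpace 𝕜 F] [NormedSpace ℝ F]
    [MeasurableSpace G] [Sub G] [MeasurableSub G] {μ : Measure G}
    (L : E →L[𝕜] E' →L[𝕜] F) {s t : Set G} (hs : MeasurableSet s) (ht : MeasurableSet t)
    (f : G → E) (g : G → E') (x : G) :
    (s.indicator f ⋆[L, μ] t.indicator g) x =
      ∫ u in s ∩ (x - ·) ⁻¹' t, L (f u) (g (x - u)) ∂μ := by
  rw [convolution_def, ← integral_indicator (hs.inter (measurable_const_sub x ht))]
  congr with u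
  by_cases hu : u ∈ s <;> by_cases hxu : x - u ∈ t <;> simp [hu, hxu]

theorem integral_sub_mul_sub (a c l r : ℝ) :
    ∫ u in l..r, (a - u) * (u - c) =
      (a + c) * (r ^ 2 - l ^ 2) / 2 - a * c * (r - l) - (r ^ 3 - l ^ 3) / 3 := by
  have expand (u : ℝ) : (a - u) * (u - c) = (a + c) * u - a * c - u ^ 2 := by ring
  simp only [expand]
  rw [intervalIntegral.integral_sub (Continuous.intervalIntegrable (by fun_prop) _ _)
      (Continuous.intervalIntegrable (by fun_prop) _ _),
    intervalIntegral.integral_sub (Continuous.intervalIntegrable (by fun_prop) _ _)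
      (Continuous.intervalIntegrable (by fun_prop) _ _),
    intervalIntegral.integral_const_mul, integral_id, intervalIntegral.integral_const,
    integral_pow, smul_eq_mul]
  ring

/-- The unnormalised stationary age density `z ↦ b - z` on `[0, b]`, extended by zero. The tail
`b - z` is `b` times the probability that a uniform `(0, b)` inter-renewal time exceeds `z`. -/
noncomputable def truncatedRamp (b : ℝ) : ℝ → ℝ :=
  (Icc 0 b).indicator (b - ·)

theorem convolution_truncatedRamp (a b x : ℝ) :
    (truncatedRamp a ⋆ truncatedRamp b) x =
      ∫ u in Icc (max 0 (x - b)) (min a x), (a - u) * (u - (x - b)) := by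
  rw [truncatedRamp, truncatedRamp,
    convolution_indicator_indicator _ measurableSet_Icc measurableSet_Icc,
    preimage_const_sub_Icc, Icc_inter_Icc, sub_zero]
  congr with u
  rw [ContinuousLinearMap.lsmul_apply, smul_eq_mul]
  ring

theorem convolution_truncatedRamp_of_le_min {a b x : ℝ} (hx : 0 ≤ x) (hxa : x ≤ a) (hxb : x ≤ b) :
    (truncatedRamp a ⋆ truncatedRamp b) x = a * b * x - (a + b) * x ^ 2 / 2 + x ^ 3 / 6 := by
  rw [convolution_truncatedRamp, max_eq_left (sub_nonpos.2 hxb), min_eq_right hxa,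
    integral_Icc_eq_integral_Ioc, ← intervalIntegral.integral_of_le hx, integral_sub_mul_sub]
  ring

theorem convolution_truncatedRamp_of_max_le {a b x : ℝ} (hax : a ≤ x) (hbx : b ≤ x)
    (hx : x ≤ a + b) :
    (truncatedRamp a ⋆ truncatedRamp b) x = (a + b - x) ^ 3 / 6 := by
  rw [convolution_truncatedRamp, max_eq_right (sub_nonneg.2 hbx), min_eq_left hax,
    integral_Icc_eq_integral_Ioc, ← intervalIntegral.integral_of_le (sub_le_iff_le_add.2 hx),
    integral_sub_mul_sub]
  ring

theorem support_convolution_truncatedRamp_subset (a b : ℝ) :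
    support (truncatedRamp a ⋆ truncatedRamp b) ⊆ Icc 0 (a + b) :=
  calc
    support (truncatedRamp a ⋆ truncatedRamp b)
      ⊆ support (truncatedRamp a) + support (truncatedRamp b) := support_convolution_subset _
    _ ⊆ Icc 0 a + Icc 0 b := add_subset_add support_indicator_subset support_indicator_subset
    _ ⊆ Icc 0 (a + b) := by simpa only [add_zero] using Icc_add_Icc_subset 0 a 0 b

/-- For `b > 0` and `f` the density `(2/b)(1 - z/b)` on `[0, b]`
(zero elsewhere) of the stationary age of a uniform `(0,b)` renewal process,
the convolution `∫ f(u) f(x-u) du` equals `(4x/b²)(1 - x/b + x²/(6b²))` for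
`0 ≤ x ≤ b`, equals `(2/(3b))(2 - x/b)³` for `b ≤ x ≤ 2b`, and equals `0` for
`x < 0` or `x > 2b`. -/
theorem stmt_17 (b : ℝ) (hb : 0 < b) (f : ℝ → ℝ)
    (hf : ∀ z : ℝ, f z = if 0 ≤ z ∧ z ≤ b then (2 / b) * (1 - z / b) else 0) :
    ∀ x : ℝ,
      ((0 ≤ x ∧ x ≤ b) →
        ∫ u : ℝ, f u * f (x - u) =
          (4 * x / b ^ 2) * (1 - x / b + x ^ 2 / (6 * b ^ 2))) ∧
      ((b ≤ x ∧ x ≤ 2 * b) →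
        ∫ u : ℝ, f u * f (x - u) = (2 / (3 * b)) * (2 - x / b) ^ 3) ∧
      ((x < 0 ∨ 2 * b < x) → ∫ u : ℝ, f u * f (x - u) = 0) := by
  intro x
  have f_eq_smul : f = (2 / b ^ 2) • truncatedRamp b := by
    ext z
    simp only [hf, Pi.smul_apply, truncatedRamp, indicator_apply, mem_Icc, smul_eq_mul,
      mul_ite, mul_zero]
    congr 1
    field_simp
  have conv_eq : ∫ u, f u * f (x - u) =
      (2 / b ^ 2) ^ 2 * (truncatedRamp b ⋆ truncatedRamp b) x := by
    change (f ⋆ f) x = _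
    rw [f_eq_smul, smul_convolution, convolution_smul, smul_smul, Pi.smul_apply, smul_eq_mul, ← sq]
  rw [conv_eq]
  refine ⟨fun ⟨hx, hxb⟩ ↦ ?_, fun ⟨hbx, hx⟩ ↦ ?_, fun hx ↦ ?_⟩
  · rw [convolution_truncatedRamp_of_le_min hx hxb hxb]
    field_simp
    ring
  · rw [convolution_truncatedRamp_of_max_le hbx hbx (hx.trans_eq (two_mul b))]
    field_simp
    ring
  · have x_notMem : x ∉ Icc 0 (b + b) := by
      rintro ⟨hx₀, hx₁⟩
      rcases hx with hx | hx <;> linarith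
    rw [notMem_support.1
      (notMem_subset (support_convolution_truncatedRamp_subset b b) x_notMem), mul_zero]
end
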